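/- arXiv:math/0611929 — 12 statements merged into one kernel-verified Lean document; each statement's English description precedes it below -/
import Mathlib

section
/- For any semigroupoid Λ there exists a spring-less semigroupoid containing Λ: there exist a semigroupoid (Γ, Γ⁽²⁾, ·) and an injective map ι : Λ → Γ such that for all f, g ∈ Λ one has (f,g) ∈ Λ⁽²⁾ if and only if (ι(f), ι(g)) ∈ Γ⁽²⁾, ι(fg) = ι(f)·ι(g) whenever (f,g) ∈ Λ⁽²⁾, and no element of Γ is a spring. -/
/-!
A single new element `e` suffices: on `Λ ∪ {e}` let `e` be idempotent, let `f e = f` be defined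
exactly when `f` is a spring of `Λ`, and let `e f` be undefined for every `f ∈ Λ`. No element is
then a spring, since `(f, e)` is composable whenever `f` is a spring or `f = e`. Associativity
reduces to the fact that, for a composable pair `(f, g)`, the product `f g` is a spring if and
only if `g` is (`Semigroupoid.isSpring_mul_iff`).
-/

universe u

/-- A semigroupoid: a set with a partially defined associative operation
(Exel, Definition 2.1). -/
structure Semigroupoid (Λ : Type u) where
  /-- the set of composable pairs -/
  D2 : Λ → Λ → Prop
  /-- the (partially meaningful) multiplication -/
  mul : Λ → Λ → Λ
  assoc₁ : ∀ f g h, D2 f g → D2 g h →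
    D2 (mul f g) h ∧ D2 f (mul g h) ∧ mul (mul f g) h = mul f (mul g h)
  assoc₂ : ∀ f g h, D2 f g → D2 (mul f g) h →
    D2 g h ∧ D2 f (mul g h) ∧ mul (mul f g) h = mul f (mul g h)
  assoc₃ : ∀ f g h, D2 g h → D2 f (mul g h) →
    D2 f g ∧ D2 (mul f g) h ∧ mul (mul f g) h = mul f (mul g h)

namespace Semigroupoid

variable {Λ : Type u} (G : Semigroupoid Λ)

/-- `f` divides `g` : either `f = g` or `f h = g` for some `h`. -/
def Divides (f g : Λ) : Prop := f = g ∨ ∃ h, G.D2 f h ∧ G.mul f h = g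

/-- `f` and `g` intersect: they admit a common multiple. -/
def Intersects (f g : Λ) : Prop := ∃ m, G.Divides f m ∧ G.Divides g m

/-- `f` and `g` are disjoint: no common multiple. -/
def Disjnt (f g : Λ) : Prop := ¬ G.Intersects f g

/-- `Λ^f`, the set of elements composable with `f` on the right. -/
def lam (f : Λ) : Set Λ := {g | G.D2 f g}

/-- A spring: an element `f` with `Λ^f = ∅`. -/
def IsSpring (f : Λ) : Prop := ∀ g, ¬ G.D2 f g

/-- `H` is a covering of `X`: `H ⊆ X` and every element of `X` intersects some element of `H`. -/
def IsCovering (H X : Set Λ) : Prop := H ⊆ X ∧ ∀ f ∈ X, ∃ h ∈ H, G.Intersects f h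

/-- `H` is a partition of `X`: a covering whose elements are pairwise disjoint. -/
def IsPartition (H X : Set Λ) : Prop :=
  G.IsCovering H X ∧ ∀ h₁ ∈ H, ∀ h₂ ∈ H, h₁ ≠ h₂ → G.Disjnt h₁ h₂

/-- `Λ^{F,G'} = (⋂_{f∈F} Λ^f) ∩ (⋂_{g∈G'} (Λ \ Λ^g))`. -/
def lamFG (F G' : Finset Λ) : Set Λ :=
  {h | (∀ f ∈ F, G.D2 f h) ∧ ∀ g ∈ G', ¬ G.D2 g h}

end Semigroupoid

section Repn

variable {Λ : Type u} {B : Type*} [Ring B] [StarRing B]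

/-- initial projection -/
def QQ (S : Λ → B) (f : Λ) : B := star (S f) * S f

/-- final projection -/
def PP (S : Λ → B) (f : Λ) : B := S f * star (S f)

/-- A representation of a semigroupoid in a unital C*-algebra (Exel, Definition 4.1). -/
structure IsRepn (G : Semigroupoid Λ) (S : Λ → B) : Prop where
  partialIsometry : ∀ f, S f * star (S f) * S f = S f
  map_comp : ∀ f g, G.D2 f g → S f * S g = S (G.mul f g)
  map_ncomp : ∀ f g, ¬ G.D2 f g → S f * S g = 0
  commQQ : ∀ f g, Commute (QQ S f) (QQ S g)
  commQP : ∀ f g, Commute (QQ S f) (PP S g)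
  commPP : ∀ f g, Commute (PP S f) (PP S g)
  orthPP : ∀ f g, G.Disjnt f g → PP S f * PP S g = 0
  QdomP : ∀ f g, G.D2 f g → QQ S f * PP S g = PP S g

/-- the product `∏_{f ∈ F} T f` (of pairwise commuting elements), via a choice of order. -/
noncomputable def fprod (F : Finset Λ) (T : Λ → B) : B := (F.toList.map T).prod

/-- the supremum `⋁_{h ∈ H} PP S h` of commuting final projections,
`P ∨ Q = P + Q - P Q`, i.e. `1 - ∏ (1 - P h)`. -/
noncomputable def joinP (H : Finset Λ) (S : Λ → B) : B := 1 - fprod H (fun h => 1 - PP S h)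

/-- Tight representation (Exel, Definition 4.5). -/
def IsTight (G : Semigroupoid Λ) (S : Λ → B) : Prop :=
  ∀ (F G' H : Finset Λ), G.IsCovering ↑H (G.lamFG F G') →
    joinP H S = fprod F (QQ S) * fprod G' (fun g => 1 - QQ S g)

end Repn

namespace Semigroupoid

theorem isSpring_mul_iff {Λ : Type u} (G : Semigroupoid Λ) {f g : Λ} (hfg : G.D2 f g) :
    G.IsSpring (G.mul f g) ↔ G.IsSpring g :=
  ⟨fun h k hk => h k (G.assoc₁ f g k hfg hk).1, fun h k hk => h k (G.assoc₂ f g k hfg hk).1⟩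

/-- Composability in `Λ ∪ {e}`, where `e` is `none`. -/
def extD2 {Λ : Type u} (G : Semigroupoid Λ) : Option Λ → Option Λ → Prop
  | some f, some g => G.D2 f g
  | some f, none => G.IsSpring f
  | none, some _ => False
  | none, none => True

/-- Multiplication in `Λ ∪ {e}`, where `e` is `none`; the value at `(e, some g)` is junk. -/
def extMul {Λ : Type u} (G : Semigroupoid Λ) : Option Λ → Option Λ → Option Λ
  | some f, some g => some (G.mul f g)
  | some f, none => some f
  | none, _ => none

/-- The semigroupoid `Λ ∪ {e}`, in which `e` is a right unit for itself and for the springs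
of `Λ`. -/
def ext {Λ : Type u} (G : Semigroupoid Λ) : Semigroupoid (Option Λ) where
  D2 := G.extD2
  mul := G.extMul
  assoc₁ := by
    rintro (_ | f) (_ | g) (_ | h) h₁ h₂ <;> simp only [extD2, extMul] at h₁ h₂ ⊢
    · simp
    · exact ⟨h₁, h₁, trivial⟩
    · exact ⟨(G.isSpring_mul_iff h₁).2 h₂, h₁, trivial⟩
    · simpa using G.assoc₁ f g h h₁ h₂
  assoc₂ := by
    rintro (_ | f) (_ | g) (_ | h) h₁ h₂ <;> simp only [extD2, extMul] at h₁ h₂ ⊢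
    · simp
    · exact ⟨trivial, h₁, trivial⟩
    · exact absurd h₂ (h₁ h)
    · exact ⟨(G.isSpring_mul_iff h₁).1 h₂, h₁, trivial⟩
    · simpa using G.assoc₂ f g h h₁ h₂
  assoc₃ := by
    rintro (_ | f) (_ | g) (_ | h) h₁ h₂ <;> simp only [extD2, extMul] at h₁ h₂ ⊢
    · simp
    · exact ⟨h₂, h₂, trivial⟩
    · exact ⟨h₂, (G.isSpring_mul_iff h₂).2 h₁, trivial⟩
    · simpa using G.assoc₃ f g h h₁ h₂

theorem not_isSpring_ext {Λ : Type u} (G : Semigroupoid Λ) (x : Option Λ) :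
    ¬ G.ext.IsSpring x := by
  rcases x with _ | f
  · exact fun h => h none trivial
  · exact fun h => h none fun g hg => h (some g) hg

end Semigroupoid

/-- Every semigroupoid embeds in a spring-less semigroupoid. -/
theorem exists_springless_extension {Λ : Type u} (G : Semigroupoid Λ) :
    ∃ (Γ : Type u) (G' : Semigroupoid Γ) (ι : Λ → Γ),
      Function.Injective ι ∧
      (∀ f g : Λ, G.D2 f g ↔ G'.D2 (ι f) (ι g)) ∧
      (∀ f g : Λ, G.D2 f g → ι (G.mul f g) = G'.mul (ι f) (ι g)) ∧
      (∀ x : Γ, ¬ G'.IsSpring x) :=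
  ⟨Option Λ, G.ext, some, Option.some_injective Λ, fun _ _ => Iff.rfl, fun _ _ _ => rfl,
    G.not_isSpring_ext⟩
end

section
/- Let S be a representation of a semigroupoid Λ in a unital C*-algebra. If f, g, h ∈ Λ are such that (f,g) ∈ Λ⁽²⁾, (f,h) ∈ Λ⁽²⁾ and fg = fh, then S_g = S_h. -/
universe u

/-- The initial projection of `S f` fixes `S g` on the left when `f` and `g` are composable:
`Q_f` dominates the final projection `P_g`, and `P_g S_g = S_g`. Hence `S g` is recovered from
`S (fg)` as `S_f* S_{fg}`. -/
theorem IsRepn.star_mul_map_mul {Λ : Type u} {B : Type*} [Ring B] [StarRing B]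
    {G : Semigroupoid Λ} {S : Λ → B} (hS : IsRepn G S) {f g : Λ} (hfg : G.D2 f g) :
    star (S f) * S (G.mul f g) = S g := by
  have hP : PP S g * S g = S g := hS.partialIsometry g
  calc star (S f) * S (G.mul f g) = QQ S f * S g := by
        rw [← hS.map_comp f g hfg, QQ, mul_assoc]
    _ = QQ S f * PP S g * S g := by rw [mul_assoc, hP]
    _ = S g := by rw [hS.QdomP f g hfg, hP]

/-- If `fg = fh` then any representation satisfies `S g = S h`. -/
theorem repn_eq_of_mul_left_cancel {Λ : Type u} {B : Type*} [CStarAlgebra B]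
    {G : Semigroupoid Λ} {S : Λ → B} (hS : IsRepn G S) (f g h : Λ)
    (hfg : G.D2 f g) (hfh : G.D2 f h) (heq : G.mul f g = G.mul f h) :
    S g = S h := by
  rw [← hS.star_mul_map_mul hfg, heq, hS.star_mul_map_mul hfh]
end

section
/- Let S be a representation of a semigroupoid Λ in a unital C*-algebra, let F, G ⊆ Λ be finite subsets, and let H be a finite subset of Λ^{F,G}. Then ⋁_{h∈H} P_h ≤ ∏_{f∈F} Q_f · ∏_{g∈G} (1 − Q_g), where the supremum of commuting projections is P ∨ Q = P + Q − PQ. -/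
/-!
Each final projection `P_h` with `h ∈ Λ^{F,G'}` lies under the projection
`E = ∏_{f∈F} Q_f ∏_{g∈G'} (1 - Q_g)`: for `f ∈ F` the pair `(f, h)` is composable, so
`Q_f P_h = P_h`; for `g ∈ G'` it is not, so `S_g S_h = 0` and `(1 - Q_g) P_h = P_h`.
Hence `(1 - P_h)(1 - E) = 1 - E` for all `h ∈ H`. Multiplying these relations gives
`(1 - J)(1 - E) = 1 - E` for the join `J`, i.e. `J E = J`, which is `J ≤ E` for projections.
Two facts on finite products carry this: commuting projections multiply to a projection
(`isStarProjection_fprod`), and a product of elements fixing `x` fixes `x` (`fprod_mul_eq`).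
-/

universe u

theorem fprod_mul_eq {Λ : Type u} {B : Type*} [Ring B] (F : Finset Λ) (T : Λ → B) (x : B)
    (h : ∀ f ∈ F, T f * x = x) : fprod F T * x = x := by
  unfold fprod
  have h' : ∀ f ∈ F.toList, T f * x = x := fun f hf => h f (Finset.mem_toList.1 hf)
  generalize F.toList = l at h' ⊢
  induction l with
  | nil => simp
  | cons a l ih =>
    rw [List.map_cons, List.prod_cons, mul_assoc, ih fun f hf => h' f (List.mem_cons_of_mem _ hf),
      h' a List.mem_cons_self]

theorem commute_fprod {Λ : Type u} {B : Type*} [Ring B] (F : Finset Λ) (T : Λ → B) (x : B)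
    (h : ∀ f, Commute x (T f)) : Commute x (fprod F T) :=
  Commute.list_prod_right _ _ fun y hy => by
    obtain ⟨f, -, rfl⟩ := List.mem_map.1 hy
    exact h f

theorem isStarProjection_fprod {Λ : Type u} {B : Type*} [Ring B] [StarRing B] (F : Finset Λ)
    (T : Λ → B) (hT : ∀ f, IsStarProjection (T f)) (hc : ∀ f g, Commute (T f) (T g)) :
    IsStarProjection (fprod F T) := by
  unfold fprod
  induction F.toList with
  | nil => simp
  | cons a l ih =>
    rw [List.map_cons, List.prod_cons]
    refine (hT a).mul ih (Commute.list_prod_right _ _ fun y hy => ?_)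
    obtain ⟨f, -, rfl⟩ := List.mem_map.1 hy
    exact hc a f

theorem commute_one_sub {B : Type*} [Ring B] {a b : B} (h : Commute a b) :
    Commute a (1 - b) :=
  (Commute.one_right a).sub_right h

theorem IsRepn.isStarProjection_PP {Λ : Type u} {B : Type*} [Ring B] [StarRing B]
    {G : Semigroupoid Λ} {S : Λ → B} (hS : IsRepn G S) (f : Λ) : IsStarProjection (PP S f) := by
  rw [isStarProjection_iff']
  unfold PP
  exact ⟨by rw [← mul_assoc, hS.partialIsometry], by simp⟩

theorem IsRepn.isStarProjection_QQ {Λ : Type u} {B : Type*} [Ring B] [StarRing B]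
    {G : Semigroupoid Λ} {S : Λ → B} (hS : IsRepn G S) (f : Λ) : IsStarProjection (QQ S f) := by
  rw [isStarProjection_iff']
  unfold QQ
  exact ⟨by rw [mul_assoc, ← mul_assoc (S f), hS.partialIsometry], by simp⟩

theorem IsRepn.QQ_mul_PP_of_not_comp {Λ : Type u} {B : Type*} [Ring B] [StarRing B]
    {G : Semigroupoid Λ} {S : Λ → B} (hS : IsRepn G S) {g h : Λ} (hgh : ¬ G.D2 g h) :
    QQ S g * PP S h = 0 := by
  unfold QQ PP
  rw [mul_assoc, ← mul_assoc (S g), hS.map_ncomp g h hgh, zero_mul, mul_zero]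

/-- For any finite `H ⊆ Λ^{F,G'}`,
`⋁_{h∈H} P_h ≤ ∏_{f∈F} Q_f ∏_{g∈G'} (1 - Q_g)`. -/
theorem repn_join_le {Λ : Type u} {B : Type*} [CStarAlgebra B]
    [PartialOrder B] [StarOrderedRing B]
    {G : Semigroupoid Λ} {S : Λ → B} (hS : IsRepn G S)
    (F G' H : Finset Λ) (hH : (↑H : Set Λ) ⊆ G.lamFG F G') :
    joinP H S ≤ fprod F (QQ S) * fprod G' (fun g => 1 - QQ S g) := by
  have hQ := hS.isStarProjection_QQ
  have hP := hS.isStarProjection_PP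
  have hE : IsStarProjection (fprod F (QQ S) * fprod G' (fun g => 1 - QQ S g)) := by
    refine (isStarProjection_fprod F _ hQ hS.commQQ).mul
      (isStarProjection_fprod G' _ (fun g => (hQ g).one_sub) fun f g => ?_) ?_
    · exact commute_one_sub (commute_one_sub (hS.commQQ g f)).symm
    · exact commute_fprod _ _ _ fun g =>
        commute_one_sub (commute_fprod _ _ _ fun f => hS.commQQ g f).symm
  have hJ : IsStarProjection (joinP H S) :=
    (isStarProjection_fprod H _ (fun h => (hP h).one_sub) fun f g =>
      commute_one_sub (commute_one_sub (hS.commPP g f)).symm).one_sub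
  have hEP : ∀ h ∈ H,
      fprod F (QQ S) * fprod G' (fun g => 1 - QQ S g) * PP S h = PP S h := by
    intro h hh
    obtain ⟨hF, hG⟩ := hH hh
    rw [mul_assoc, fprod_mul_eq G' _ _ fun g hg => ?_,
      fprod_mul_eq F _ _ fun f hf => hS.QdomP f h (hF f hf)]
    rw [sub_mul, one_mul, hS.QQ_mul_PP_of_not_comp (hG g hg), sub_zero]
  generalize fprod F (QQ S) * fprod G' (fun g => 1 - QQ S g) = E at hE hEP ⊢
  -- Taking adjoints turns `E P_h = P_h` into `P_h E = P_h`.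
  have hPE : ∀ h ∈ H, PP S h * E = PP S h := fun h hh => by
    simpa [hE.isSelfAdjoint.star_eq, (hP h).isSelfAdjoint.star_eq] using
      congrArg star (hEP h hh)
  have key : fprod H (fun h => 1 - PP S h) * (1 - E) = 1 - E :=
    fprod_mul_eq H _ _ fun h hh => by
      rw [sub_mul, one_mul, mul_sub, mul_one, hPE h hh, sub_self, sub_zero]
  have hJE : joinP H S * (1 - E) = 0 := by
    rw [joinP, sub_mul, one_mul, key, sub_self]
  rw [mul_sub, mul_one, sub_eq_zero] at hJE
  exact hJ.le_of_mul_eq_left hE hJE.symm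
end

section
/- Let S be a tight representation of a semigroupoid Λ in a unital C*-algebra and let f ∈ Λ be a spring. Then S_f = 0. -/
universe u

/-- A tight representation kills springs. -/
theorem tight_repn_spring_eq_zero {Λ : Type u} {B : Type*} [CStarAlgebra B]
    {G : Semigroupoid Λ} {S : Λ → B} (hS : IsRepn G S) (ht : IsTight G S)
    (f : Λ) (hf : G.IsSpring f) :
    S f = 0 := by
  -- `Λ^{{f}, ∅} = Λ^f = ∅` is covered by the empty set, so tightness forces `Q_f = 0`.
  have h := ht {f} ∅ ∅ ⟨by simp, fun g hg => absurd (hg.1 f (by simp)) (hf g)⟩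
  have hQ : star (S f) * S f = 0 := by
    simpa [joinP, fprod, QQ, eq_comm] using h
  exact CStarRing.star_mul_self_eq_zero_iff (S f) |>.mp hQ
end

section
/- Let S be a tight representation of a semigroupoid Λ in a unital C*-algebra and let f ∈ Λ be such that Λ^f is finite and every element of Λ^f is a spring. Then S_f = 0. -/
/-!
If a finite covering `H` of `Λ^f` consists of elements killed by `S`, then tightness, applied to the
pair `({f}, ∅)`, gives `Q_f = ⋁_{h ∈ H} P_h = 0` and hence `S_f = S_f Q_f = 0`
(`eq_zero_of_covering`). A spring `g` is killed because `Λ^g = ∅` is covered by the empty set.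
The theorem follows by taking `H = Λ^f` itself, all of whose elements are springs.
-/

universe u

/-- A tight representation kills `f` as soon as it kills every element of some finite covering of
`Λ^f`; the covering may be empty when `f` is a spring. -/
theorem eq_zero_of_covering {Λ : Type u} {B : Type*} [Ring B] [StarRing B]
    {G : Semigroupoid Λ} {S : Λ → B} (hS : IsRepn G S) (ht : IsTight G S)
    (f : Λ) (H : Finset Λ) (hH : G.IsCovering ↑H (G.lam f)) (h0 : ∀ h ∈ H, S h = 0) :
    S f = 0 := by
  have hlam : G.lamFG {f} ∅ = G.lam f := by
    ext h
    simp [Semigroupoid.lamFG, Semigroupoid.lam]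
  have hjoin : joinP H S = 0 := by
    have hone : fprod H (fun h => 1 - PP S h) = 1 := by
      refine List.prod_eq_one fun x hx => ?_
      obtain ⟨h, hh, rfl⟩ := List.mem_map.1 hx
      simp [PP, h0 h (Finset.mem_toList.1 hh)]
    rw [joinP, hone, sub_self]
  have hQ : QQ S f = 0 := by
    have key := ht {f} ∅ H (hlam ▸ hH)
    rw [hjoin] at key
    simpa [fprod] using key.symm
  rw [← hS.partialIsometry f, mul_assoc]
  change S f * QQ S f = 0
  rw [hQ, mul_zero]

/-- If `Λ^f` is finite and consists of springs, every tight representation kills `f`. -/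
theorem tight_repn_eq_zero_of_springs {Λ : Type u} {B : Type*} [CStarAlgebra B]
    {G : Semigroupoid Λ} {S : Λ → B} (hS : IsRepn G S) (ht : IsTight G S)
    (f : Λ) (hfin : (G.lam f).Finite) (hsp : ∀ g ∈ G.lam f, G.IsSpring g) :
    S f = 0 := by
  refine eq_zero_of_covering hS ht f hfin.toFinset ?_ fun g hg => ?_
  · rw [hfin.coe_toFinset]
    exact ⟨subset_rfl, fun g hg => ⟨g, hg, g, Or.inl rfl, Or.inl rfl⟩⟩
  · have hspring := hsp g (hfin.mem_toFinset.1 hg)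
    exact eq_zero_of_covering hS ht g ∅
      ⟨by simp, fun h hh => (hspring h hh).elim⟩ (by simp)
end

section
/- Let S be a tight representation of a semigroupoid Λ in a unital C*-algebra, and suppose f ∈ Λ is such that Λ^f = {e} for a single element e satisfying (e,e) ∈ Λ⁽²⁾ and e·e = e. Then S_e is a projection and S_e = Q_f. -/
/-!
Tightness applied to the covering `{e}` of `Λ^f = {e}` gives `P_e = Q_f`, so it suffices that
`S_e = P_e`. Since `S_e` is an idempotent partial isometry, `Q_e P_e = S_e* S_e S_e S_e* = S_e*`;
composability of `(e, e)` also gives `Q_e P_e = P_e`. Thus `S_e* = P_e`, which is self-adjoint.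
-/

universe u

/-- If `Λ^f = {e}` with `e` idempotent, then `S e` is a projection and `S e = Q_f`. -/
theorem tight_repn_single_idempotent {Λ : Type u} {B : Type*} [CStarAlgebra B]
    {G : Semigroupoid Λ} {S : Λ → B} (hS : IsRepn G S) (ht : IsTight G S)
    (f e : Λ) (he : G.lam f = {e}) (hee : G.D2 e e) (hmul : G.mul e e = e) :
    (star (S e) = S e ∧ S e * S e = S e) ∧ S e = QQ S f := by
  have hidem : S e * S e = S e := by rw [hS.map_comp e e hee, hmul]
  have hpi : star (S e) * S e * star (S e) = star (S e) := by
    have h := congrArg star (hS.partialIsometry e)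
    simpa [mul_assoc] using h
  -- `Q_e P_e = S_e* (S_e S_e) S_e* = S_e* S_e S_e* = S_e*`, while `Q_e P_e = P_e` as `(e, e)` is
  -- composable.
  have hstar : star (S e) = PP S e := by
    rw [← hS.QdomP e e hee]
    calc star (S e) = star (S e) * (S e * S e) * star (S e) := by rw [hidem, hpi]
      _ = QQ S e * PP S e := by simp only [QQ, PP, mul_assoc]
  have hsa : star (S e) = S e := by
    have h := congrArg star hstar
    rw [star_star, PP, star_mul, star_star] at h
    exact hstar.trans h.symm
  have hD : ∀ g, G.D2 f g ↔ g = e := fun g => by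
    have h : g ∈ G.lam f ↔ g ∈ ({e} : Set Λ) := by rw [he]
    exact h
  -- `{e}` covers `Λ^{{f}, ∅} = {e}`.
  have hcov : G.IsCovering ↑({e} : Finset Λ) (G.lamFG {f} ∅) := by
    refine ⟨fun x hx => ?_, fun x hx => ⟨e, by simp, ?_⟩⟩
    · simpa [Semigroupoid.lamFG, hD] using hx
    · have hxe : x = e := by simpa [Semigroupoid.lamFG, hD] using hx
      exact ⟨e, Or.inl hxe, Or.inl rfl⟩
  have hPQ : PP S e = QQ S f := by
    simpa [joinP, fprod] using ht {f} ∅ {e} hcov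
  exact ⟨⟨hsa, hidem⟩, hsa.symm.trans (hstar.trans hPQ)⟩
end

section
/- Let Λ be a small category, viewed as a semigroupoid, and let S : Λ → B(H) be a representation on a Hilbert space H. If either S is nondegenerate or obj(Λ) is infinite, then for all finite subsets F, G ⊆ Λ with Λ^{F,G} = ∅ one has ∏_{f∈F} Q_f · ∏_{g∈G} (1 − Q_g) = 0. -/
/-!
For an object `v`, the operator `S v` is a self-adjoint projection, and for every morphism `f` the
initial projection `QQ S f` equals `S (src f)` (`QQ_eq_src`). Hence two initial projections are
equal when the sources agree and orthogonal otherwise.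

If some `f₀ ∈ F`, then `Λ^{F,G'} = ∅` says in particular that the object `src f₀` is not in
`Λ^{F,G'}`: either some `f ∈ F` has a different source, and `QQ S f * QQ S f₀ = 0`, or some
`g ∈ G'` has the same source, and `QQ S f₀ * (1 - QQ S g) = 0`. In both cases the product vanishes.

If `F` is empty, then every object is the source of some element of `G'`. So there are only
finitely many objects and `S` is nondegenerate. The product `T` of the `1 - QQ S g` then annihilates
every `S v`, hence every `S f` and `star (S f)`, hence the C*-algebra they generate, and `T = 0`
(`eq_zero_of_nondegen`).
-/

universe u

/-- A small category, viewed as a semigroupoid whose elements are all its morphisms: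
`(f,g)` is composable iff `s f = r g`; objects are identified with identity morphisms. -/
structure CatSemigroupoid (Λ : Type u) extends Semigroupoid Λ where
  /-- source (domain) of a morphism, as an identity morphism -/
  src : Λ → Λ
  /-- range (codomain) of a morphism, as an identity morphism -/
  rng : Λ → Λ
  /-- the morphisms which are (identities on) objects -/
  IsObj : Λ → Prop
  obj_src : ∀ f, IsObj (src f)
  obj_rng : ∀ f, IsObj (rng f)
  src_obj : ∀ v, IsObj v → src v = v
  rng_obj : ∀ v, IsObj v → rng v = v
  comp_iff : ∀ f g, D2 f g ↔ src f = rng g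
  mul_src : ∀ f, mul f (src f) = f
  rng_mul' : ∀ f, mul (rng f) f = f
  src_mul : ∀ f g, D2 f g → src (mul f g) = src g
  rng_mul : ∀ f g, D2 f g → rng (mul f g) = rng f

namespace CatSemigroupoid

variable {Λ : Type u} (C : CatSemigroupoid Λ)

/-- for an object `v`, `Λ^v = {g : r g = v}`. -/
def lamObj (v : Λ) : Set Λ := {g | C.rng g = v}

end CatSemigroupoid
section Hilb

variable {Λ : Type u} {H : Type*} [NormedAddCommGroup H] [InnerProductSpace ℂ H] [CompleteSpace H]

/-- A representation on a Hilbert space is nondegenerate if the closed *-subalgebra of `B(H)`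
generated by its range acts nondegenerately on `H`. -/
def Nondegen (S : Λ → (H →L[ℂ] H)) : Prop :=
  (Submodule.span ℂ {y : H | ∃ a ∈ (NonUnitalStarAlgebra.adjoin ℂ
      (Set.range S)).topologicalClosure, ∃ x : H, a x = y}).topologicalClosure = ⊤

end Hilb
section ListProd

variable {Λ : Type u} {B : Type*} [Ring B]

theorem mul_fprod_eq_zero [StarRing B] {F : Finset Λ} {T : Λ → B} {x : B} {f : Λ} (hf : f ∈ F)
    (hc : ∀ g ∈ F, Commute x (T g)) (h0 : x * T f = 0) :
    x * fprod F T = 0 ∧ fprod F T * x = 0 := by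
  have key : ∀ l : List Λ, f ∈ l → (∀ g ∈ l, Commute x (T g)) → x * (l.map T).prod = 0 := by
    intro l
    induction l with
    | nil => simp
    | cons a l ih =>
      intro hfl hcl
      rw [List.map_cons, List.prod_cons]
      rcases List.mem_cons.1 hfl with rfl | hfl
      · rw [← mul_assoc, h0, zero_mul]
      · rw [← mul_assoc, (hcl a (by simp)).eq, mul_assoc,
          ih hfl (fun g hg => hcl g (by simp [hg])), mul_zero]
  have h1 : x * fprod F T = 0 :=
    key _ (Finset.mem_toList.2 hf) (fun g hg => hc g (Finset.mem_toList.1 hg))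
  have h2 : Commute x (fprod F T) := by
    apply Commute.list_prod_right
    intro y hy
    obtain ⟨g, hg, rfl⟩ := List.mem_map.1 hy
    exact hc g (Finset.mem_toList.1 hg)
  exact ⟨h1, by rw [← h2.eq, h1]⟩

end ListProd

section CatRepn

variable {Λ : Type u} {B : Type*} [Ring B] [StarRing B] {C : CatSemigroupoid Λ} {S : Λ → B}

theorem star_obj (hS : IsRepn C.toSemigroupoid S) {v : Λ} (hv : C.IsObj v) :
    star (S v) = S v ∧ S v * S v = S v := by
  have hD : C.D2 v v := by rw [C.comp_iff, C.src_obj v hv, C.rng_obj v hv]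
  have hm : C.mul v v = v := by simpa only [C.src_obj v hv] using C.mul_src v
  have hi : S v * S v = S v := by rw [hS.map_comp v v hD, hm]
  have h1 := hS.QdomP v v hD
  have h2 : star (S v) * S v * star (S v) = star (S v) := by
    have h := congrArg star (hS.partialIsometry v)
    simpa [mul_assoc] using h
  -- `S v * S v = S v` collapses `QQ S v * PP S v` to `star (S v)`, so `star (S v) = PP S v`.
  have h3 : star (S v) = S v * star (S v) := by
    calc star (S v) = star (S v) * (S v * S v) * star (S v) := by rw [hi, h2]
      _ = S v * star (S v) := by simpa [QQ, PP, mul_assoc] using h1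
  have h4 : S v = S v * star (S v) := by
    have h := congrArg star h3
    simpa using h
  exact ⟨h3.trans h4.symm, hi⟩

/-- The initial projection of `f` depends only on the source of `f`. -/
theorem QQ_eq_src (hS : IsRepn C.toSemigroupoid S) (f : Λ) : QQ S f = S (C.src f) := by
  have hv := C.obj_src f
  obtain ⟨hs, hi⟩ := star_obj hS hv
  have hD : C.D2 f (C.src f) := by rw [C.comp_iff, C.rng_obj _ hv]
  have h1 := hS.QdomP f _ hD
  rw [PP, hs, hi] at h1
  rw [← h1, QQ, mul_assoc, hS.map_comp _ _ hD, C.mul_src]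

theorem QQ_mul_of_src_ne (hS : IsRepn C.toSemigroupoid S) {f g : Λ} (h : C.src f ≠ C.src g) :
    QQ S f * QQ S g = 0 := by
  rw [QQ_eq_src hS, QQ_eq_src hS]
  apply hS.map_ncomp
  rw [C.comp_iff, C.src_obj _ (C.obj_src f), C.rng_obj _ (C.obj_src g)]
  exact h

theorem QQ_mul_of_src_eq (hS : IsRepn C.toSemigroupoid S) {f g : Λ} (h : C.src f = C.src g) :
    QQ S f * QQ S g = QQ S f := by
  rw [QQ_eq_src hS, QQ_eq_src hS, ← h]
  exact (star_obj hS (C.obj_src f)).2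

theorem rng_mul_self (hS : IsRepn C.toSemigroupoid S) (f : Λ) : S (C.rng f) * S f = S f := by
  rw [hS.map_comp, C.rng_mul']
  rw [C.comp_iff, C.src_obj _ (C.obj_rng f)]

theorem src_mul_star (hS : IsRepn C.toSemigroupoid S) (f : Λ) :
    S (C.src f) * star (S f) = star (S f) := by
  rw [← QQ_eq_src hS, QQ]
  have h := congrArg star (hS.partialIsometry f)
  simpa [mul_assoc] using h

end CatRepn

/-- An operator killing the range of a nondegenerate map and the adjoints of that range is zero. -/
theorem eq_zero_of_nondegen {Λ : Type u} {H : Type*} [NormedAddCommGroup H]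
    [InnerProductSpace ℂ H] [CompleteSpace H] {S : Λ → H →L[ℂ] H} (hnd : Nondegen S)
    {T : H →L[ℂ] H} (h1 : ∀ f, T * S f = 0) (h2 : ∀ f, T * star (S f) = 0) : T = 0 := by
  have hadj : ∀ a ∈ NonUnitalStarAlgebra.adjoin ℂ (Set.range S), T * a = 0 ∧ T * star a = 0 := by
    intro a ha
    induction ha using NonUnitalStarAlgebra.adjoin_induction with
    | mem x hx => obtain ⟨f, rfl⟩ := hx; exact ⟨h1 f, h2 f⟩
    | add x y _ _ hx hy => simp [mul_add, hx, hy]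
    | zero => simp
    | mul x y _ _ hx hy => simp [← mul_assoc, hx, hy]
    | smul r x _ hx => simp [hx]
    | star x _ hx => simpa using hx.symm
  have hcl : ∀ a ∈ (NonUnitalStarAlgebra.adjoin ℂ (Set.range S)).topologicalClosure,
      T * a = 0 := by
    have hc : IsClosed {a : H →L[ℂ] H | T * a = 0} :=
      isClosed_eq (continuous_const.mul continuous_id) continuous_const
    intro a ha
    exact closure_minimal (fun b hb => (hadj b hb).1) hc ha
  have hker : (⊤ : Submodule ℂ H) ≤ LinearMap.ker (T : H →ₗ[ℂ] H) := by
    rw [← hnd]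
    refine Submodule.topologicalClosure_minimal _ (Submodule.span_le.2 ?_) T.isClosed_ker
    rintro y ⟨a, ha, x, rfl⟩
    exact congrArg (fun A : H →L[ℂ] H => A x) (hcl a ha)
  ext x
  exact hker (Submodule.mem_top (x := x))

/-- Nondegenerate (or infinite-object) Hilbert space representations of a small category
vanish on empty `Λ^{F,G'}`. -/
theorem cat_repn_prod_eq_zero {Λ : Type u} {H : Type*} [NormedAddCommGroup H]
    [InnerProductSpace ℂ H] [CompleteSpace H]
    (C : CatSemigroupoid Λ) {S : Λ → H →L[ℂ] H} (hS : IsRepn C.toSemigroupoid S)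
    (hnd : Nondegen S ∨ (setOf C.IsObj).Infinite)
    (F G' : Finset Λ) (hempty : C.toSemigroupoid.lamFG F G' = ∅) :
    fprod F (QQ S) * fprod G' (fun g => 1 - QQ S g) = 0 := by
  -- `Λ^{F,G'}` contains no object, by emptiness.
  have hobj : ∀ v, C.IsObj v → (∀ f ∈ F, C.src f = v) → ∃ g ∈ G', C.src g = v := by
    intro v hv hF
    by_contra! hG
    have hmem : v ∈ C.toSemigroupoid.lamFG F G' :=
      ⟨fun f hf => by rw [C.comp_iff, C.rng_obj v hv, hF f hf],
        fun g hg => by rw [C.comp_iff, C.rng_obj v hv]; exact hG g hg⟩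
    rw [hempty] at hmem
    exact hmem
  have hcomm : ∀ f g, Commute (QQ S f) (1 - QQ S g) := fun f g =>
    (Commute.one_right _).sub_right (hS.commQQ f g)
  have hort : ∀ f g, C.src f = C.src g → QQ S f * (1 - QQ S g) = 0 := fun f g h => by
    rw [mul_sub, mul_one, QQ_mul_of_src_eq hS h, sub_self]
  rcases F.eq_empty_or_nonempty with rfl | ⟨f₀, hf₀⟩
  · have hcov : ∀ v, C.IsObj v → ∃ g ∈ G', C.src g = v := fun v hv => hobj v hv (by simp)
    have hnd' : Nondegen S := by
      refine hnd.resolve_right fun hinf => hinf ?_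
      refine (G'.finite_toSet.image C.src).subset fun v hv => ?_
      obtain ⟨g, hg, h⟩ := hcov v hv
      exact ⟨g, hg, h⟩
    have hv0 : ∀ v, C.IsObj v → fprod G' (fun g => 1 - QQ S g) * S v = 0 := by
      intro v hv
      obtain ⟨g, hg, rfl⟩ := hcov v hv
      rw [← QQ_eq_src hS]
      exact (mul_fprod_eq_zero hg (fun k _ => hcomm g k) (hort g g rfl)).2
    rw [eq_zero_of_nondegen hnd' (T := fprod G' (fun g => 1 - QQ S g)) ?_ ?_, mul_zero]
    · intro f
      rw [← rng_mul_self hS f, ← mul_assoc, hv0 _ (C.obj_rng f), zero_mul]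
    · intro f
      rw [← src_mul_star hS f, ← mul_assoc, hv0 _ (C.obj_src f), zero_mul]
  · -- The factor `QQ S f₀` can be split off since `(1 - QQ S f₀) * QQ S f₀ = 0`.
    have hA : fprod F (QQ S) * QQ S f₀ = fprod F (QQ S) := by
      have h := (mul_fprod_eq_zero (x := 1 - QQ S f₀) (T := QQ S) hf₀
        (fun k _ => (hcomm k f₀).symm)
        (by rw [← (hcomm f₀ f₀).eq]; exact hort f₀ f₀ rfl)).2
      rw [mul_sub, mul_one, sub_eq_zero] at h
      exact h.symm
    by_cases hF : ∀ f ∈ F, C.src f = C.src f₀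
    · obtain ⟨g, hg, h⟩ := hobj _ (C.obj_src f₀) hF
      rw [← hA, mul_assoc,
        (mul_fprod_eq_zero hg (fun k _ => hcomm f₀ k) (hort f₀ g h.symm)).1, mul_zero]
    · push Not at hF
      obtain ⟨f, hf, hne⟩ := hF
      rw [← hA, (mul_fprod_eq_zero (x := QQ S f₀) (T := QQ S) hf (fun k _ => hS.commQQ f₀ k)
        (QQ_mul_of_src_ne hS hne.symm)).2, zero_mul]
end

section
/- Let (Λ, d) be a row-finite k-graph without sources, viewed as a semigroupoid. Then for every object v of Λ and every n ∈ ℕ^k, the set Λ^n(v) is a partition of Λ^v. -/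
/-!
Both halves rest on unique factorization. If `r f = v`, the absence of sources gives `g` of degree
`n` with `fg` defined; since `d (fg) = n + d f`, the morphism `fg` also factors as `hk` with
`d h = n`, so `h ∈ Λ^n(v)` intersects `f`. Conversely, if two elements of degree `n` divide a common
`m`, both are the initial factor of degree `n` of `m`, hence they coincide.
-/

universe u

/-- A `k`-graph `(Λ, d)`: a small category (viewed as a semigroupoid) together with a degree
functor `d : Λ → ℕ^k` satisfying the unique factorization property. -/
structure KGraph (k : ℕ) (Λ : Type u) extends CatSemigroupoid Λ where
  d : Λ → (Fin k → ℕ)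
  d_mul : ∀ f g, D2 f g → d (mul f g) = d f + d g
  factor : ∀ f n m, d f = n + m →
    ∃! p : Λ × Λ, D2 p.1 p.2 ∧ d p.1 = n ∧ d p.2 = m ∧ mul p.1 p.2 = f

namespace KGraph

variable {k : ℕ} {Λ : Type u} (G : KGraph k Λ)

/-- `Λ^n(v) = {f : r f = v, d f = n}`. -/
def lamN (v : Λ) (n : Fin k → ℕ) : Set Λ := {f | G.rng f = v ∧ G.d f = n}

/-- `(Λ, d)` is row-finite and has no sources: `0 < |Λ^n(v)| < ∞` for every object `v`
and every `n ∈ ℕ^k`. -/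
def RowFiniteNoSources : Prop :=
  ∀ v, G.IsObj v → ∀ n : Fin k → ℕ, (G.lamN v n).Finite ∧ (G.lamN v n).Nonempty

end KGraph

section KP

variable {k : ℕ} {Λ : Type u} {B : Type*} [Ring B] [StarRing B]

/-- A Kumjian–Pask family for a row-finite `k`-graph without sources. -/
structure IsKPFamily (G : KGraph k Λ) (S : Λ → B) : Prop where
  partialIsometry : ∀ f, S f * star (S f) * S f = S f
  kp1_proj : ∀ v, G.IsObj v → star (S v) = S v ∧ S v * S v = S v
  kp1_orth : ∀ u v, G.IsObj u → G.IsObj v → u ≠ v → S u * S v = 0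
  kp2 : ∀ f g, G.D2 f g → S (G.mul f g) = S f * S g
  kp3 : ∀ f, star (S f) * S f = S (G.src f)
  kp4 : ∀ v, G.IsObj v → ∀ (n : Fin k → ℕ) (hfin : (G.lamN v n).Finite),
    S v = ∑ f ∈ hfin.toFinset, S f * star (S f)

end KP
/-- Identities absorb the case `f = m` of divisibility: in a category, `f ∣ m` always means
`m = f h` for some composable `h`. -/
theorem CatSemigroupoid.exists_mul_of_divides {Λ : Type u} (C : CatSemigroupoid Λ) {f m : Λ}
    (h : C.toSemigroupoid.Divides f m) : ∃ g, C.D2 f g ∧ C.mul f g = m := by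
  rcases h with rfl | h
  · exact ⟨C.src f, (C.comp_iff _ _).2 (C.rng_obj _ (C.obj_src f)).symm, C.mul_src f⟩
  · exact h

theorem KGraph.eq_of_divides_of_d_eq {k : ℕ} {Λ : Type u} (G : KGraph k Λ) {f g m : Λ}
    (hd : G.d f = G.d g) (hf : G.toSemigroupoid.Divides f m)
    (hg : G.toSemigroupoid.Divides g m) : f = g := by
  obtain ⟨a, hfa, hm⟩ := G.exists_mul_of_divides hf
  obtain ⟨b, hgb, hm'⟩ := G.exists_mul_of_divides hg
  have ha : G.d m = G.d f + G.d a := by rw [← hm, G.d_mul _ _ hfa]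
  have hb : G.d m = G.d f + G.d b := by rw [← hm', G.d_mul _ _ hgb, hd]
  have hab : G.d b = G.d a := add_left_cancel (hb.symm.trans ha)
  have huniq := (G.factor m _ _ ha).unique (y₁ := (f, a)) (y₂ := (g, b))
    ⟨hfa, rfl, rfl, hm⟩ ⟨hgb, hd.symm, hab, hm'⟩
  exact congrArg Prod.fst huniq

/-- In a row-finite `k`-graph without sources, `Λ^n(v)` is a partition of `Λ^v`. -/
theorem lamN_isPartition {k : ℕ} {Λ : Type u} (G : KGraph k Λ)
    (hrf : G.RowFiniteNoSources) (v : Λ) (hv : G.IsObj v) (n : Fin k → ℕ) :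
    G.toSemigroupoid.IsPartition (G.lamN v n) (G.toCatSemigroupoid.lamObj v) := by
  refine ⟨⟨fun f hf => hf.1, fun f hf => ?_⟩, fun h₁ hh₁ h₂ hh₂ hne => ?_⟩
  · obtain ⟨g, hgr, hgd⟩ := (hrf (G.src f) (G.obj_src f) n).2
    have hfg : G.D2 f g := (G.comp_iff _ _).2 hgr.symm
    obtain ⟨⟨h, l⟩, ⟨hhl, hhd, -, hm⟩, -⟩ := G.factor (G.mul f g) n (G.d f)
      (by rw [G.d_mul _ _ hfg, hgd, add_comm])
    have hhr : G.rng h = v := by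
      rw [← G.rng_mul _ _ hhl, hm, G.rng_mul _ _ hfg]
      exact hf
    exact ⟨h, ⟨hhr, hhd⟩, G.mul f g, Or.inr ⟨g, hfg, rfl⟩, Or.inr ⟨l, hhl, hm⟩⟩
  · rintro ⟨m, hm₁, hm₂⟩
    exact hne (G.eq_of_divides_of_d_eq (hh₁.2.trans hh₂.2.symm) hm₁ hm₂)
end

section
/- Let (Λ, d) be a row-finite k-graph without sources and let {S_f : f ∈ Λ} be a Kumjian–Pask family in a unital C*-algebra. For every object v of Λ and every finite covering H of Λ^v one has S_v = ⋁_{h∈H} S_h S_h*, where the supremum of commuting projections is P ∨ Q = P + Q − PQ. -/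
/-!
Write `P f = S f * star (S f)` and let `n` be the pointwise supremum of the degrees of the elements
of `H`. By (KP4), `S v` is the sum of the projections `P f` over the paths `f` of degree `n` with
range `v`, and in a C*-algebra projections whose sum is a projection dominating each of them are
pairwise orthogonal (`KPFamily.orth`). Applying (KP4) at the source of `h ∈ H` in degree `n - d h`
writes `P h` as a sum of projections `P (h g)` with `h g` again of degree `n`, so `P f * P h` is
either `P f` or `0`, the former whenever `h` divides `f` (`PP_mul_of_divides`, `PP_mul_eq_zero`).

Unique factorization shows that a path `f` of degree `n` which intersects `h` is in fact divisible
by `h` (`KGraph.divides_of_intersects`). As `H` is a covering, each such `f` is divisible by some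
`h ∈ H`, hence `P f * ∏ (1 - P h) = 0`, and summing over `f` gives `S v * ∏ (1 - P h) = 0`. On the
other hand `S v * P h = P h` gives `(1 - S v) * ∏ (1 - P h) = 1 - S v`. Adding the two identities,
`∏ (1 - P h) = 1 - S v`.
-/


universe u

namespace KGraph

variable {k : ℕ} {Λ : Type*} (G : KGraph k Λ)

/-- In a category the clause `f = g` of divisibility is redundant, as `f = f * src f`. -/
lemma exists_mul_of_divides {f g : Λ} (h : G.Divides f g) :
    ∃ a, G.D2 f a ∧ G.mul f a = g := by
  rcases h with rfl | h
  · refine ⟨G.src f, ?_, G.mul_src f⟩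
    rw [G.comp_iff, G.rng_obj _ (G.obj_src f)]
  · exact h

/-- If `f` and `h` have a common multiple and `d h ≤ d f`, then uniqueness of the factorization
of that multiple forces the initial segment of `f` of degree `d h` to be `h`. -/
lemma divides_of_intersects {f h : Λ} (hi : G.Intersects f h) (hd : G.d h ≤ G.d f) :
    ∃ c, G.D2 h c ∧ G.mul h c = f := by
  obtain ⟨m, hfm, hhm⟩ := hi
  obtain ⟨a, hfa, rfl⟩ := G.exists_mul_of_divides hfm
  obtain ⟨b, hhb, hb⟩ := G.exists_mul_of_divides hhm
  obtain ⟨⟨h₀, c⟩, ⟨hc, hdh, hdc, rfl⟩, -⟩ :=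
    G.factor f (G.d h) (G.d f - G.d h) (add_tsub_cancel_of_le hd).symm
  simp only at hc hdh hdc hfa hb
  obtain ⟨hca, hhca, hass⟩ := G.assoc₂ h₀ c a hc hfa
  have hdm : G.d (G.mul (G.mul h₀ c) a) = G.d h + G.d b := by
    rw [← hb, G.d_mul _ _ hhb]
  have hdca : G.d (G.mul c a) = G.d b := by
    have h1 := G.d_mul _ _ hhca
    rw [← hass, hdm, hdh] at h1
    exact (add_left_cancel h1).symm
  have key := (G.factor _ _ _ hdm).unique (y₁ := (h₀, G.mul c a)) (y₂ := (h, b))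
    ⟨hhca, hdh, hdca, hass.symm⟩ ⟨hhb, rfl, rfl, hb⟩
  have hh : h₀ = h := congrArg Prod.fst key
  subst hh
  exact ⟨c, hc, rfl⟩

end KGraph

/-- In a C*-algebra a sum `∑ star (x i) * x i` vanishes only if every `x i` does. -/
lemma eq_zero_of_sum_star_mul_self {ι B : Type*} [CStarAlgebra B] (s : Finset ι) (x : ι → B)
    (h : ∑ i ∈ s, star (x i) * x i = 0) : ∀ i ∈ s, x i = 0 := by
  let _ : PartialOrder B := CStarAlgebra.spectralOrder B
  have : StarOrderedRing B := CStarAlgebra.spectralOrderedRing B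
  intro i hi
  have := (Finset.sum_eq_zero_iff_of_nonneg (fun j _ => star_mul_self_nonneg (x j))).1 h i hi
  exact CStarRing.star_mul_self_eq_zero_iff (x i) |>.1 this

namespace KPFamily

variable {k : ℕ} {Λ : Type*} {B : Type*} [CStarAlgebra B] {G : KGraph k Λ} {S : Λ → B}

lemma star_PP (f : Λ) : star (PP S f) = PP S f := by
  simp [PP]

lemma PP_idem (hS : IsKPFamily G S) (f : Λ) : PP S f * PP S f = PP S f := by
  unfold PP
  rw [← mul_assoc, hS.partialIsometry]

lemma rng_mul_PP (hS : IsKPFamily G S) (f : Λ) : S (G.rng f) * PP S f = PP S f := by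
  have hD : G.D2 (G.rng f) f := by
    rw [G.comp_iff, G.src_obj _ (G.obj_rng f)]
  unfold PP
  rw [← mul_assoc, ← hS.kp2 _ _ hD, G.rng_mul']

/-- Compressing (KP4) by `P e` gives `∑ star (P f * P e) * (P f * P e) = 0`, the sum being over the
paths `f ≠ e` with the range and degree of `e`. -/
lemma orth (hrf : G.RowFiniteNoSources) (hS : IsKPFamily G S) {e f : Λ}
    (hr : G.rng f = G.rng e) (hd : G.d f = G.d e) (hne : f ≠ e) : PP S f * PP S e = 0 := by
  classical
  have hfin := (hrf _ (G.obj_rng e) (G.d e)).1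
  have he : e ∈ hfin.toFinset := by simp [KGraph.lamN]
  have hf : f ∈ hfin.toFinset.erase e := by simp [KGraph.lamN, hr, hd, hne]
  refine eq_zero_of_sum_star_mul_self (hfin.toFinset.erase e) (fun f => PP S f * PP S e) ?_ f hf
  have h4 : S (G.rng e) = ∑ f ∈ hfin.toFinset, PP S f := hS.kp4 _ (G.obj_rng e) (G.d e) hfin
  have h5 : PP S e * S (G.rng e) * PP S e = PP S e := by
    rw [mul_assoc, rng_mul_PP hS, PP_idem hS]
  rw [h4, Finset.mul_sum, Finset.sum_mul, ← Finset.add_sum_erase _ _ he, PP_idem hS,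
    PP_idem hS, add_eq_left] at h5
  rw [← h5]
  refine Finset.sum_congr rfl fun g _ => ?_
  rw [star_mul, star_PP, star_PP, mul_assoc, ← mul_assoc (PP S g), PP_idem hS, mul_assoc]

lemma PP_mul_of_divides (hS : IsKPFamily G S) {f h c : Λ} (hc : G.D2 h c)
    (hf : G.mul h c = f) : PP S f * PP S h = PP S f := by
  have h1 : PP S h * PP S f = PP S f := by
    subst hf
    unfold PP
    rw [hS.kp2 _ _ hc, ← mul_assoc, ← mul_assoc, hS.partialIsometry]
  have h2 := congrArg star h1
  rwa [star_mul, star_PP, star_PP] at h2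

/-- (KP4) at `src h`, conjugated by `S h`. -/
lemma PP_eq_sum (hS : IsKPFamily G S) (h : Λ) (n : Fin k → ℕ)
    (hfin : (G.lamN (G.src h) n).Finite) :
    PP S h = ∑ g ∈ hfin.toFinset, PP S (G.mul h g) := by
  have h1 : PP S h = S h * S (G.src h) * star (S h) := by
    rw [← hS.kp3, ← mul_assoc, hS.partialIsometry, PP]
  rw [h1, hS.kp4 _ (G.obj_src h) n hfin, Finset.mul_sum, Finset.sum_mul]
  refine Finset.sum_congr rfl fun g hg => ?_
  have hgr : G.rng g = G.src h := ((hfin.mem_toFinset).1 hg).1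
  unfold PP
  rw [hS.kp2 h g ((G.comp_iff _ _).2 hgr.symm), star_mul]
  simp only [mul_assoc]

lemma PP_mul_eq_zero (hrf : G.RowFiniteNoSources) (hS : IsKPFamily G S) {f h : Λ}
    (hr : G.rng h = G.rng f) (hd : G.d h ≤ G.d f)
    (hn : ¬ ∃ c, G.D2 h c ∧ G.mul h c = f) : PP S f * PP S h = 0 := by
  have hfin := (hrf _ (G.obj_src h) (G.d f - G.d h)).1
  rw [PP_eq_sum hS h _ hfin, Finset.mul_sum]
  refine Finset.sum_eq_zero fun g hg => ?_
  obtain ⟨hg1, hg2⟩ : G.rng g = G.src h ∧ G.d g = G.d f - G.d h := (hfin.mem_toFinset).1 hg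
  have hD : G.D2 h g := (G.comp_iff _ _).2 hg1.symm
  refine orth hrf hS ?_ ?_ fun hfg => hn ⟨g, hD, hfg.symm⟩
  · rw [G.rng_mul _ _ hD, hr]
  · rw [G.d_mul _ _ hD, hg2, add_tsub_cancel_of_le hd]

end KPFamily

/-- If right multiplication by each factor either fixes or kills `x`, and some factor kills it, then
the product kills `x`; no commutation between the factors is needed. -/
lemma mul_list_prod_eq_zero {Λ B : Type*} [Ring B] (x : B) (T : Λ → B) (l : List Λ)
    (hl : ∀ h ∈ l, x * T h = x ∨ x * T h = 0) (h0 : ∃ h ∈ l, x * T h = 0) :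
    x * (l.map T).prod = 0 := by
  induction l with
  | nil => simp at h0
  | cons a l ih =>
    rw [List.map_cons, List.prod_cons, ← mul_assoc]
    rcases eq_or_ne (x * T a) 0 with ha | ha
    · rw [ha, zero_mul]
    · rw [(hl a (by simp)).resolve_right ha]
      refine ih (fun h hh => hl h (by simp [hh])) ?_
      obtain ⟨h, hh, hx⟩ := h0
      rcases List.mem_cons.1 hh with rfl | hh
      · exact absurd hx ha
      · exact ⟨h, hh, hx⟩

lemma mul_list_prod_eq_self {Λ B : Type*} [Ring B] (x : B) (T : Λ → B) (l : List Λ)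
    (hl : ∀ h ∈ l, x * T h = x) : x * (l.map T).prod = x := by
  induction l with
  | nil => simp
  | cons a l ih =>
    rw [List.map_cons, List.prod_cons, ← mul_assoc, hl a (by simp)]
    exact ih fun h hh => hl h (by simp [hh])

/-- For a Kumjian–Pask family, `S v = ⋁_{h∈H} S h S h*` for every finite covering `H`
of `Λ^v`. -/
theorem kp_cover_join {k : ℕ} {Λ : Type u} {B : Type*} [CStarAlgebra B]
    (G : KGraph k Λ) (hrf : G.RowFiniteNoSources)
    {S : Λ → B} (hS : IsKPFamily G S) (v : Λ) (hv : G.IsObj v)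
    (H : Finset Λ)
    (hcov : G.toSemigroupoid.IsCovering ↑H (G.toCatSemigroupoid.lamObj v)) :
    S v = joinP H S := by
  obtain ⟨hH, hcov⟩ := hcov
  have hrng : ∀ h ∈ H, G.rng h = v := fun h hh => hH hh
  set n : Fin k → ℕ := H.sup G.d with hn
  have hfin := (hrf v hv n).1
  have h4 : S v = ∑ f ∈ hfin.toFinset, PP S f := hS.kp4 v hv n hfin
  have hzero : S v * fprod H (fun h => 1 - PP S h) = 0 := by
    rw [h4, Finset.sum_mul]
    refine Finset.sum_eq_zero fun f hf => ?_
    obtain ⟨hf1, hf2⟩ : G.rng f = v ∧ G.d f = n := (hfin.mem_toFinset).1 hf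
    have hle : ∀ h ∈ H, G.d h ≤ G.d f := fun h hh => hf2 ▸ Finset.le_sup hh
    refine mul_list_prod_eq_zero _ _ _ (fun h hh => ?_) ?_
    · have hhH : h ∈ H := Finset.mem_toList.1 hh
      by_cases hdiv : ∃ c, G.D2 h c ∧ G.mul h c = f
      · obtain ⟨c, hc, hcf⟩ := hdiv
        right
        rw [mul_sub, mul_one, KPFamily.PP_mul_of_divides hS hc hcf, sub_self]
      · left
        rw [mul_sub, mul_one, KPFamily.PP_mul_eq_zero hrf hS ((hrng h hhH).trans hf1.symm)
          (hle h hhH) hdiv, sub_zero]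
    · obtain ⟨h, hh, hi⟩ := hcov f hf1
      obtain ⟨c, hc, hcf⟩ := G.divides_of_intersects hi (hle h hh)
      refine ⟨h, Finset.mem_toList.2 hh, ?_⟩
      rw [mul_sub, mul_one, KPFamily.PP_mul_of_divides hS hc hcf, sub_self]
  have hself : (1 - S v) * fprod H (fun h => 1 - PP S h) = 1 - S v := by
    refine mul_list_prod_eq_self _ _ _ fun h hh => ?_
    have h1 : S v * PP S h = PP S h := by
      have := KPFamily.rng_mul_PP hS h
      rwa [hrng h (Finset.mem_toList.1 hh)] at this
    rw [mul_sub, mul_one, sub_mul, one_mul, h1, sub_self, sub_zero]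
  rw [sub_mul, one_mul, hzero, sub_zero] at hself
  rw [joinP, hself, sub_sub_cancel]
end

section
/- Suppose no row of the {0,1}-matrix A is identically zero and let {s_x : x ∈ G} be an Exel–Laca A-family in a unital C*-algebra. Fix x ∈ G, let Λ_A(x) = {α ∈ Λ_A : α₁ = x}, and let H be a finite partition of Λ_A(x) (with respect to the divisibility relation of the Markov semigroupoid Λ_A). Then Σ_{h∈H} P_h = P_x. -/
/-!
The proof is by induction on a bound for the lengths of the words in the partition.
A partition of the words starting at `x` is recorded by the finite set `F` of the tails `t`
of its words `x :: t`. If the empty tail occurs, disjointness forces `F = {[]}` and the claim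
is trivial. Otherwise every `j` with `A x j = 1` must be the first letter of some tail, because
the word `xj` intersects a member of the partition. Hence row `x` has finite support, and the
summation relation with `X = {x}`, `Y = ∅` gives `Q_x = ∑_{A x j = 1} P_j`. The tails starting
with `j` form a partition at `j` with shorter words, so conjugating the induction hypothesis by
`s_x` yields `∑ P_h = s_x (∑ P_j) s_x* = s_x Q_x s_x* = P_x` (`sum_tails_eq`).
-/

universe u

variable {I : Type u}

/-- `l` is an admissible word for the 0-1 matrix `A`. -/
def IsAdmissible (A : I → I → ℕ) (l : List I) : Prop :=
  l ≠ [] ∧ l.Chain' (fun i j => A i j = 1)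

/-- The Markov semigroupoid `Λ_A`: all finite admissible words. -/
def MWord (A : I → I → ℕ) : Type u := {l : List I // IsAdmissible A l}

namespace MWord

variable {A : I → I → ℕ}

/-- first letter of a word -/
def headL (α : MWord A) : I := α.val.head α.prop.1

/-- last letter of a word -/
def lastL (α : MWord A) : I := α.val.getLast α.prop.1

/-- `(α, β)` is a composable pair iff `A(α_n, β₁) = 1`. -/
def D2 (α β : MWord A) : Prop := A (lastL α) (headL β) = 1

/-- `α` divides `β`: `α = β` or `α γ = β` (concatenation) for some admissible `γ`. -/
def Divides (α β : MWord A) : Prop :=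
  α = β ∨ ∃ γ : MWord A, D2 α γ ∧ α.val ++ γ.val = β.val

/-- `α` and `β` intersect: they admit a common multiple. -/
def Intersects (α β : MWord A) : Prop := ∃ m : MWord A, Divides α m ∧ Divides β m

/-- `α` and `β` are disjoint. -/
def Disjnt (α β : MWord A) : Prop := ¬ Intersects α β

/-- `H` is a partition of `X`: `H ⊆ X`, every element of `X` intersects some element of
`H`, and the elements of `H` are pairwise disjoint. -/
def IsPartition (H X : Set (MWord A)) : Prop :=
  H ⊆ X ∧ (∀ f ∈ X, ∃ h ∈ H, Intersects f h) ∧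
    ∀ h₁ ∈ H, ∀ h₂ ∈ H, h₁ ≠ h₂ → Disjnt h₁ h₂

end MWord

section EL

variable {B : Type*} [Ring B] [StarRing B]

/-- initial projection -/
def elQ (s : I → B) (x : I) : B := star (s x) * s x

/-- final projection -/
def elP (s : I → B) (x : I) : B := s x * star (s x)

/-- product of a finite family of (commuting) elements, via a choice of order -/
noncomputable def fprodI (F : Finset I) (T : I → B) : B := (F.toList.map T).prod

/-- `A(X,Y,j) = ∏_{x∈X} A(x,j) ∏_{y∈Y} (1 - A(y,j))` -/
def AXY (A : I → I → ℕ) (X Y : Finset I) (j : I) : ℕ :=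
  (∏ x ∈ X, A x j) * ∏ y ∈ Y, (1 - A y j)

/-- An Exel–Laca `A`-family in a unital C*-algebra. -/
structure IsELFamily (A : I → I → ℕ) (s : I → B) : Prop where
  entries : ∀ i j, A i j = 0 ∨ A i j = 1
  partialIsometry : ∀ x, s x * star (s x) * s x = s x
  commQQ : ∀ x y, Commute (elQ s x) (elQ s y)
  commQP : ∀ x y, Commute (elQ s x) (elP s y)
  commPP : ∀ x y, Commute (elP s x) (elP s y)
  orthPP : ∀ x y, x ≠ y → elP s x * elP s y = 0
  QP : ∀ x y, elQ s x * elP s y = (A x y : B) * elP s y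
  summation : ∀ (X Y : Finset I) (hfin : {j | AXY A X Y j ≠ 0}.Finite),
    fprodI X (elQ s) * fprodI Y (fun y => 1 - elQ s y)
      = ∑ j ∈ hfin.toFinset, (AXY A X Y j : B) * elP s j

/-- `s_α = s_{α₁} ⋯ s_{α_n}` for an admissible word `α`. -/
def sWord {A : I → I → ℕ} (s : I → B) (α : MWord A) : B := (α.val.map s).prod

end EL

/-- The partition identity at the level of lists: `F` is the set of tails `t` of the words
`x :: t` of a partition, divisibility being expressed by the prefix relation. -/
lemma sum_tails_eq {B : Type*} [CStarAlgebra B] {A : I → I → ℕ} {s : I → B}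
    (hs : IsELFamily A s) (N : ℕ) : ∀ (x : I) (F : Finset (List I)),
    (∀ t ∈ F, t.length < N) →
    (∀ t ∈ F, (x :: t).IsChain (fun i j => A i j = 1)) →
    (∀ u : List I, (x :: u).IsChain (fun i j => A i j = 1) → ∃ t ∈ F, u <+: t ∨ t <+: u) →
    (∀ t ∈ F, ∀ t' ∈ F, t <+: t' → t = t') →
    ∑ t ∈ F, ((x :: t).map s).prod * star ((x :: t).map s).prod = elP s x := by
  classical
  induction N with
  | zero =>
    intro x F hN _ hcov _
    obtain ⟨t, ht, _⟩ := hcov [] (by simp)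
    exact absurd (hN t ht) (by simp)
  | succ N ih =>
    intro x F hN hadm hcov hdis
    by_cases hnil : [] ∈ F
    · have hF : F = {[]} := by
        ext t
        simp only [Finset.mem_singleton]
        exact ⟨fun ht => (hdis [] hnil t ht List.nil_prefix).symm, fun h => h ▸ hnil⟩
      simp [hF, elP]
    · have hhead : ∀ j, A x j = 1 → ∃ u, j :: u ∈ F := by
        intro j hj
        obtain ⟨t, ht, h⟩ := hcov [j] (by simpa using hj)
        cases t with
        | nil => exact absurd ht hnil
        | cons k u =>
          have : j = k := by
            rcases h with h | h
            · exact (List.cons_prefix_cons.1 h).1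
            · exact (List.cons_prefix_cons.1 h).1.symm
          exact ⟨u, this ▸ ht⟩
      have hAXY : ∀ j, AXY A {x} ∅ j = A x j := by intro j; simp [AXY]
      have hfin : {j | AXY A {x} ∅ j ≠ 0}.Finite := by
        refine (F.finite_toSet.image (fun t => t.headD x)).subset ?_
        intro j hj
        rw [Set.mem_ofPred_eq, hAXY] at hj
        obtain ⟨u, hu⟩ := hhead j ((hs.entries x j).resolve_left hj)
        exact ⟨j :: u, hu, rfl⟩
      have hmem : ∀ j, j ∈ hfin.toFinset ↔ A x j = 1 := by
        intro j
        rw [Set.Finite.mem_toFinset, Set.mem_ofPred_eq, hAXY]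
        rcases hs.entries x j with h | h <;> simp [h]
      have hQ : elQ s x = ∑ j ∈ hfin.toFinset, elP s j := by
        have h := hs.summation {x} ∅ hfin
        simp only [fprodI, Finset.toList_singleton, List.map_cons, List.map_nil,
          List.prod_cons, List.prod_nil, Finset.toList_empty, mul_one] at h
        rw [h]
        refine Finset.sum_congr rfl fun j hj => ?_
        rw [hAXY, (hmem j).1 hj, Nat.cast_one, one_mul]
      let Fj : I → Finset (List I) := fun j =>
        F.preimage (fun u => j :: u) (by intro a _ b _ h; simpa using h)
      have hFj : ∀ j u, u ∈ Fj j ↔ j :: u ∈ F := fun j u => Finset.mem_preimage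
      have hj : ∀ j ∈ hfin.toFinset,
          ∑ u ∈ Fj j, ((j :: u).map s).prod * star ((j :: u).map s).prod = elP s j := by
        intro j hj
        have hxj := (hmem j).1 hj
        refine ih j (Fj j) ?_ ?_ ?_ ?_
        · intro t ht
          have := hN _ ((hFj j t).1 ht)
          simpa using this
        · intro t ht
          exact (List.isChain_cons_cons.1 (hadm _ ((hFj j t).1 ht))).2
        · intro u hu
          obtain ⟨t, ht, h⟩ := hcov (j :: u) (List.isChain_cons_cons.2 ⟨hxj, hu⟩)
          cases t with
          | nil => exact absurd ht hnil
          | cons k v =>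
            rcases h with h | h
            · obtain ⟨rfl, h'⟩ := List.cons_prefix_cons.1 h
              exact ⟨v, (hFj _ v).2 ht, Or.inl h'⟩
            · obtain ⟨rfl, h'⟩ := List.cons_prefix_cons.1 h
              exact ⟨v, (hFj _ v).2 ht, Or.inr h'⟩
        · intro t ht t' ht' h
          have := hdis _ ((hFj j t).1 ht) _ ((hFj j t').1 ht')
            (List.cons_prefix_cons.2 ⟨rfl, h⟩)
          simpa using this
      calc ∑ t ∈ F, ((x :: t).map s).prod * star ((x :: t).map s).prod
          = ∑ t ∈ F, s x * ((t.map s).prod * star (t.map s).prod) * star (s x) := by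
            refine Finset.sum_congr rfl fun t _ => ?_
            simp [mul_assoc]
        _ = ∑ p ∈ hfin.toFinset.sigma Fj, s x *
              (((p.1 :: p.2).map s).prod * star ((p.1 :: p.2).map s).prod) * star (s x) := by
            symm
            refine Finset.sum_nbij (fun p => p.1 :: p.2) ?_ ?_ ?_ ?_
            · rintro ⟨j, u⟩ h
              exact (hFj j u).1 (Finset.mem_sigma.1 h).2
            · rintro ⟨j, u⟩ _ ⟨k, v⟩ _ h
              simp only [List.cons.injEq] at h
              obtain ⟨rfl, rfl⟩ := h
              rfl
            · intro t ht
              cases t with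
              | nil => exact absurd ht hnil
              | cons k v =>
                refine ⟨⟨k, v⟩, Finset.mem_coe.2 (Finset.mem_sigma.2 ⟨?_, (hFj k v).2 ht⟩), rfl⟩
                exact (hmem k).2 (List.isChain_cons_cons.1 (hadm _ ht)).1
            · intro p _
              rfl
        _ = s x * (∑ j ∈ hfin.toFinset, ∑ u ∈ Fj j,
              ((j :: u).map s).prod * star ((j :: u).map s).prod) * star (s x) := by
            rw [Finset.sum_sigma, Finset.mul_sum, Finset.sum_mul]
            refine Finset.sum_congr rfl fun j _ => ?_
            rw [Finset.mul_sum, Finset.sum_mul]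
        _ = s x * elQ s x * star (s x) := by
            rw [Finset.sum_congr rfl hj, hQ]
        _ = elP s x := by
            rw [elQ, ← mul_assoc, hs.partialIsometry x, elP]

lemma MWord.Divides.isPrefix {A : I → I → ℕ} {α β : MWord A} (h : MWord.Divides α β) :
    α.val <+: β.val := by
  rcases h with rfl | ⟨γ, _, h⟩
  · exact List.prefix_rfl
  · exact ⟨γ.val, h⟩

lemma MWord.divides_of_isPrefix {A : I → I → ℕ} {α β : MWord A} (h : α.val <+: β.val) :
    MWord.Divides α β := by
  obtain ⟨r, hr⟩ := h
  by_cases hr0 : r = []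
  · left
    apply Subtype.ext
    simpa [hr0] using hr
  · right
    have hc : (α.val ++ r).IsChain (fun i j => A i j = 1) := hr ▸ β.prop.2
    have h3 := List.isChain_append.1 hc
    refine ⟨⟨r, hr0, h3.2.1⟩, ?_, hr⟩
    exact h3.2.2 _ (List.getLast_mem_getLast? α.prop.1) _ (List.head_mem_head? hr0)

/-- If no row of `A` is zero and `H` is a finite partition of
`Λ_A(x) = {α : α₁ = x}`, then `Σ_{h∈H} P_h = P_x` for any Exel–Laca `A`-family. -/
theorem el_partition_sum {B : Type*} [CStarAlgebra B] {A : I → I → ℕ}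
    (hrow : ∀ i : I, ∃ j : I, A i j = 1)
    {s : I → B} (hs : IsELFamily A s) (x : I) (H : Finset (MWord A))
    (hpart : MWord.IsPartition (↑H) {α : MWord A | MWord.headL α = x}) :
    ∑ h ∈ H, sWord s h * star (sWord s h) = elP s x := by
  classical
  obtain ⟨hsub, hcov, hdis⟩ := hpart
  have hcons : ∀ h ∈ H, x :: h.val.tail = h.val := by
    intro h hh
    have hx : h.val.head h.prop.1 = x := hsub hh
    rw [← hx]
    exact List.cons_head_tail h.prop.1
  have hmemF : ∀ t, t ∈ H.image (fun h => h.val.tail) →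
      ∃ h ∈ H, h.val = x :: t := by
    intro t ht
    obtain ⟨h, hh, rfl⟩ := Finset.mem_image.1 ht
    exact ⟨h, hh, (hcons h hh).symm⟩
  rw [← sum_tails_eq hs (H.sup (fun h => h.val.length)) x (H.image (fun h => h.val.tail))
    ?_ ?_ ?_ ?_]
  · rw [Finset.sum_image]
    · refine Finset.sum_congr rfl fun h hh => ?_
      rw [hcons h hh]
      rfl
    · intro a ha b hb hab
      apply Subtype.ext
      rw [← hcons a ha, ← hcons b hb]
      exact congrArg _ hab
  · intro t ht
    obtain ⟨h, hh, he⟩ := hmemF t ht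
    have h1 : h.val.length ≤ H.sup (fun h => h.val.length) :=
      Finset.le_sup (f := fun h : MWord A => h.val.length) hh
    rw [he, List.length_cons] at h1
    exact h1
  · intro t ht
    obtain ⟨h, hh, he⟩ := hmemF t ht
    exact he ▸ h.prop.2
  · intro u hu
    obtain ⟨h, hh, m, h1, h2⟩ := hcov ⟨x :: u, by simp, hu⟩ rfl
    refine ⟨h.val.tail, Finset.mem_image_of_mem _ hh, ?_⟩
    have h1 := h1.isPrefix
    have h2 := h2.isPrefix
    rw [← hcons h hh] at h2
    -- Two prefixes of the same word are comparable.
    rcases List.prefix_or_prefix_of_prefix h1 h2 with h3 | h3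
    · exact Or.inl (List.cons_prefix_cons.1 h3).2
    · exact Or.inr (List.cons_prefix_cons.1 h3).2
  · intro t ht t' ht' hp
    obtain ⟨h, hh, he⟩ := hmemF t ht
    obtain ⟨h', hh', he'⟩ := hmemF t' ht'
    by_contra hne
    refine hdis h hh h' hh' ?_ ⟨h', MWord.divides_of_isPrefix ?_, Or.inl rfl⟩
    · rintro rfl
      exact hne (by simpa using he.symm.trans he')
    · rw [he, he']
      exact List.cons_prefix_cons.2 ⟨rfl, hp⟩
end

section
/- Let (Λ, d) be a row-finite k-graph without sources and let {S_f : f ∈ Λ} be a Kumjian–Pask family in a unital C*-algebra B. Then the map f ↦ S_f is a representation of the semigroupoid Λ in B: each S_f is a partial isometry; S_f S_g = S_{fg} if s(f) = r(g) and S_f S_g = 0 otherwise; the projections Q_f = S_f* S_f and P_g = S_g S_g* all commute amongst themselves; P_f P_g = 0 whenever f ⊥ g; and Q_f P_g = P_g whenever s(f) = r(g). -/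
/-!
The initial projections of a Kumjian–Pask family are the vertex projections `S (src f)`, which are
equal or orthogonal, and `S (rng g)` is a left unit for `S g`; everything except the statements on
products of two final projections follows from this.

For final projections, (KP4) writes the projection `S v` as a finite sum of the projections `P_h`,
`h ∈ Λ^n(v)`. A sum of projections which is a projection has pairwise orthogonal terms: compressing
by `P_f` gives `∑_{h ≠ f} (P_h P_f)* (P_h P_f) = 0`, a vanishing sum of positive elements. Hence
`P_f P_g = 0` for distinct `f`, `g` of the same degree (`IsKPFamily.PP_orth`).
On the other hand `P_f = ∑_{h ∈ Λ^n(s(f))} P_{fh}` (`IsKPFamily.PP_expand`). Expanding `P_f` with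
`n = d g` and `P_g` with `n = d f` turns both into sums of final projections of the common degree
`d f + d g`, any two of which are equal or orthogonal. So `P_f` and `P_g` commute, and if `f ⊥ g`
then no `fh` equals any `gh'` and the product vanishes.
-/

universe u

namespace IsKPFamily

variable {k : ℕ} {Λ : Type u} {B : Type*} [CStarAlgebra B] {G : KGraph k Λ} {S : Λ → B}

lemma D2_src (G : KGraph k Λ) (f : Λ) : G.D2 f (G.src f) :=
  (G.comp_iff _ _).2 (G.rng_obj _ (G.obj_src f)).symm

lemma D2_rng (G : KGraph k Λ) (f : Λ) : G.D2 (G.rng f) f :=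
  (G.comp_iff _ _).2 (G.src_obj _ (G.obj_rng f))

lemma mul_S_src (hS : IsKPFamily G S) (f : Λ) : S f * S (G.src f) = S f := by
  rw [← hS.kp2 _ _ (D2_src G f), G.mul_src]

lemma S_rng_mul (hS : IsKPFamily G S) (f : Λ) : S (G.rng f) * S f = S f := by
  rw [← hS.kp2 _ _ (D2_rng G f), G.rng_mul']

lemma star_PP (S : Λ → B) (f : Λ) : star (PP S f) = PP S f := by simp [PP]

lemma PP_idem (hS : IsKPFamily G S) (f : Λ) : PP S f * PP S f = PP S f := by
  unfold PP
  rw [← mul_assoc, hS.partialIsometry]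

lemma S_rng_mul_PP (hS : IsKPFamily G S) (f : Λ) : S (G.rng f) * PP S f = PP S f := by
  unfold PP
  rw [← mul_assoc, hS.S_rng_mul]

lemma PP_mul_S_rng (hS : IsKPFamily G S) (f : Λ) : PP S f * S (G.rng f) = PP S f := by
  have h := congrArg star (hS.S_rng_mul_PP f)
  rwa [star_mul, star_PP, (hS.kp1_proj _ (G.obj_rng f)).1] at h

lemma obj_mul_PP_eq_zero (hS : IsKPFamily G S) {v g : Λ} (hv : G.IsObj v) (h : v ≠ G.rng g) :
    S v * PP S g = 0 := by
  rw [← hS.S_rng_mul_PP g, ← mul_assoc, hS.kp1_orth _ _ hv (G.obj_rng g) h, zero_mul]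

lemma PP_mul_obj_eq_zero (hS : IsKPFamily G S) {v g : Λ} (hv : G.IsObj v) (h : v ≠ G.rng g) :
    PP S g * S v = 0 := by
  rw [← hS.PP_mul_S_rng g, mul_assoc, hS.kp1_orth _ _ (G.obj_rng g) hv (Ne.symm h), mul_zero]

/-- The spectral order on the C⋆-algebra `B` enters only here, to say that a vanishing sum of
elements `a* a` has vanishing terms. -/
lemma eq_zero_of_sum_star_mul_self {ι : Type*} (s : Finset ι) (a : ι → B)
    (h : ∑ i ∈ s, star (a i) * a i = 0) : ∀ i ∈ s, a i = 0 := by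
  letI : PartialOrder B := CStarAlgebra.spectralOrder B
  letI : StarOrderedRing B := CStarAlgebra.spectralOrderedRing B
  intro i hi
  exact CStarRing.star_mul_self_eq_zero_iff (a i) |>.1
    ((Finset.sum_eq_zero_iff_of_nonneg fun j _ => star_mul_self_nonneg (a j)).1 h i hi)

/-- Final projections of distinct morphisms of the same degree are orthogonal. -/
lemma PP_orth (hrf : G.RowFiniteNoSources) (hS : IsKPFamily G S) {f g : Λ}
    (hd : G.d f = G.d g) (hne : f ≠ g) : PP S g * PP S f = 0 := by
  classical
  by_cases hr : G.rng f = G.rng g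
  · have hfin := (hrf _ (G.obj_rng f) (G.d f)).1
    have hf : f ∈ hfin.toFinset := by simp [KGraph.lamN]
    have hg : g ∈ hfin.toFinset.erase f := by simp [KGraph.lamN, hr, hd, hne.symm]
    have hterm : ∀ h, star (PP S h * PP S f) * (PP S h * PP S f) = PP S f * PP S h * PP S f := by
      intro h
      rw [star_mul, star_PP, star_PP, mul_assoc, ← mul_assoc (PP S h), hS.PP_idem, mul_assoc]
    have hsum : ∑ h ∈ hfin.toFinset, PP S f * PP S h * PP S f = PP S f := by
      have h4 : S (G.rng f) = ∑ h ∈ hfin.toFinset, PP S h := hS.kp4 _ (G.obj_rng f) _ hfin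
      rw [← Finset.sum_mul, ← Finset.mul_sum, ← h4, hS.PP_mul_S_rng, hS.PP_idem]
    rw [← Finset.add_sum_erase _ _ hf, hS.PP_idem, hS.PP_idem] at hsum
    refine eq_zero_of_sum_star_mul_self (hfin.toFinset.erase f) (fun h => PP S h * PP S f) ?_ g hg
    simp only [hterm]
    exact left_eq_add.1 hsum.symm
  · rw [← hS.S_rng_mul_PP f, ← mul_assoc, hS.PP_mul_obj_eq_zero (G.obj_rng f) hr, zero_mul]

/-- Final projections of morphisms of the same degree commute, being equal or orthogonal. -/
lemma PP_commute_of_d_eq (hrf : G.RowFiniteNoSources) (hS : IsKPFamily G S) {f g : Λ}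
    (hd : G.d f = G.d g) : Commute (PP S f) (PP S g) := by
  by_cases hne : f = g
  · rw [hne]
  · rw [Commute, SemiconjBy, PP_orth hrf hS hd hne, PP_orth hrf hS hd.symm (Ne.symm hne)]

lemma PP_expand (hS : IsKPFamily G S) (f : Λ) (n : Fin k → ℕ)
    (hfin : (G.lamN (G.src f) n).Finite) :
    PP S f = ∑ h ∈ hfin.toFinset, PP S (G.mul f h) := by
  have hterm : ∀ h ∈ hfin.toFinset, PP S (G.mul f h) = S f * (S h * star (S h)) * star (S f) := by
    intro h hh
    have hr : G.rng h = G.src f := ((hfin.mem_toFinset).1 hh).1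
    rw [PP, hS.kp2 _ _ ((G.comp_iff _ _).2 hr.symm), star_mul]
    simp only [mul_assoc]
  rw [Finset.sum_congr rfl hterm, ← Finset.sum_mul, ← Finset.mul_sum,
    ← hS.kp4 _ (G.obj_src f) n hfin, hS.mul_S_src, PP]

end IsKPFamily

/-- A Kumjian–Pask family is a representation of the underlying semigroupoid. -/
theorem kp_isRepn {k : ℕ} {Λ : Type u} {B : Type*} [CStarAlgebra B]
    (G : KGraph k Λ) (hrf : G.RowFiniteNoSources)
    {S : Λ → B} (hS : IsKPFamily G S) :
    IsRepn G.toSemigroupoid S := by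
  have hQ : ∀ f, QQ S f = S (G.src f) := hS.kp3
  have hfin : ∀ f n, (G.lamN (G.src f) n).Finite := fun f n => (hrf _ (G.obj_src f) n).1
  have hmem : ∀ {f n h}, h ∈ (hfin f n).toFinset → G.D2 f h ∧ G.d h = n := by
    intro f n h hh
    obtain ⟨h1, h2⟩ := ((hfin f n).mem_toFinset).1 hh
    exact ⟨(G.comp_iff _ _).2 h1.symm, h2⟩
  -- extensions of `f` by degree `d g` and of `g` by degree `d f` have the same degree
  have hdeg : ∀ {f g a b}, a ∈ (hfin f (G.d g)).toFinset → b ∈ (hfin g (G.d f)).toFinset →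
      G.d (G.mul f a) = G.d (G.mul g b) := by
    intro f g a b ha hb
    rw [G.d_mul _ _ (hmem ha).1, G.d_mul _ _ (hmem hb).1, (hmem ha).2, (hmem hb).2, add_comm]
  refine ⟨hS.partialIsometry, fun f g h => (hS.kp2 f g h).symm, ?_, ?_, ?_, ?_, ?_, ?_⟩
  · intro f g h
    have hne : G.src f ≠ G.rng g := fun e => h ((G.comp_iff _ _).2 e)
    rw [← hS.mul_S_src f, ← hS.S_rng_mul g, mul_assoc, ← mul_assoc (S (G.src f)),
      hS.kp1_orth _ _ (G.obj_src f) (G.obj_rng g) hne, zero_mul, mul_zero]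
  · intro f g
    rw [hQ, hQ]
    by_cases h : G.src f = G.src g
    · rw [h]
    · rw [Commute, SemiconjBy, hS.kp1_orth _ _ (G.obj_src f) (G.obj_src g) h,
        hS.kp1_orth _ _ (G.obj_src g) (G.obj_src f) (Ne.symm h)]
  · intro f g
    rw [hQ, Commute, SemiconjBy]
    by_cases h : G.src f = G.rng g
    · rw [h, hS.S_rng_mul_PP, hS.PP_mul_S_rng]
    · rw [hS.obj_mul_PP_eq_zero (G.obj_src f) h, hS.PP_mul_obj_eq_zero (G.obj_src f) h]
  · intro f g
    rw [hS.PP_expand f (G.d g) (hfin _ _), hS.PP_expand g (G.d f) (hfin _ _)]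
    exact Commute.sum_left _ _ _ fun a ha => Commute.sum_right _ _ _ fun b hb =>
      hS.PP_commute_of_d_eq hrf (hdeg ha hb)
  · intro f g h
    rw [hS.PP_expand f (G.d g) (hfin _ _), hS.PP_expand g (G.d f) (hfin _ _), Finset.sum_mul_sum]
    refine Finset.sum_eq_zero fun a ha => Finset.sum_eq_zero fun b hb => ?_
    refine hS.PP_orth hrf (hdeg ha hb).symm fun e => h ?_
    exact ⟨G.mul f a, Or.inr ⟨a, (hmem ha).1, rfl⟩, Or.inr ⟨b, (hmem hb).1, e⟩⟩
  · intro f g h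
    rw [hQ, (G.comp_iff _ _).1 h, hS.S_rng_mul_PP]
end

section
/- Let (Λ, d) be a row-finite k-graph without sources and let {S_f : f ∈ Λ} be a Kumjian–Pask family of operators on a Hilbert space H such that the closed *-subalgebra of B(H) generated by {S_f : f ∈ Λ} acts nondegenerately on H. Then the map f ↦ S_f is a tight representation of the semigroupoid Λ. -/
/-!
Write `P_f = S_f S_f*`. Two facts about the range projections carry the proof.

* `kp_orth`: distinct morphisms of the same degree have orthogonal range projections. For a common
  range `v` this is because the `P_f`, `f ∈ Λ^n(v)`, are projections whose sum is the projection
  `S_v`.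
* `kp_expand`: for every degree `n`, `P_f` is the sum of the `P_{fe}` with `r e = s f`, `d e = n`.

Expanding `P_f` and `P_g` at the common degree `d f ⊔ d g` shows that they commute, and that they
are orthogonal when `f` and `g` have no common multiple; the remaining axioms of a representation
are immediate from `S_f = S_{r f} S_f S_{s f}`.

For tightness, nondegeneracy implies that an operator is determined by its products with the vertex
projections `S_v` (`kp_ext`), so both sides of the tightness identity are compared after multiplying
by `S_v`. If `v ∉ Λ^{F,G'}` both sides vanish, as every `h` in the covering has its range in
`Λ^{F,G'}`. If `v ∈ Λ^{F,G'}`, let `n` be the supremum of the degrees of the covering `K` and write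
`S_v` as the sum of the `P_f`, `f ∈ Λ^n(v)`. Each such `f` intersects some `h ∈ K`; as `d h ≤ d f`,
unique factorization makes `h` a divisor of `f` (`kgraph_divides`), so `P_f ≤ P_h`, and hence
`∏_{h ∈ K} (1 - P_h)` annihilates `S_v`.
-/

universe u

/-! ### Products of lists of commuting elements -/

section ListProd

variable {Λ : Type*} {B : Type*} [Ring B]

lemma list_prod_mul_eq_self (T : Λ → B) (a : B) (l : List Λ) (h : ∀ x ∈ l, T x * a = a) :
    (l.map T).prod * a = a := by
  induction l with
  | nil => simp
  | cons x t ih =>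
    rw [List.map_cons, List.prod_cons, mul_assoc, ih fun y hy => h y (List.mem_cons_of_mem _ hy),
      h x List.mem_cons_self]

lemma list_prod_commute (T : Λ → B) (a : B) (l : List Λ) (h : ∀ x ∈ l, Commute (T x) a) :
    Commute (l.map T).prod a := by
  apply Commute.list_prod_left
  intro y hy
  obtain ⟨x, hx, rfl⟩ := List.mem_map.1 hy
  exact h x hx

lemma list_prod_mul_eq_zero (T : Λ → B) (a : B) (l : List Λ) (h : ∀ x ∈ l, Commute (T x) a)
    (h0 : ∃ x ∈ l, T x * a = 0) : (l.map T).prod * a = 0 := by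
  induction l with
  | nil => simp at h0
  | cons x t ih =>
    have ht : ∀ y ∈ t, Commute (T y) a := fun y hy => h y (List.mem_cons_of_mem _ hy)
    rw [List.map_cons, List.prod_cons, mul_assoc]
    obtain ⟨y, hy, hya⟩ := h0
    rcases List.mem_cons.1 hy with rfl | hy
    · rw [(list_prod_commute T a t ht).eq, ← mul_assoc, hya, zero_mul]
    · rw [ih ht ⟨y, hy, hya⟩, mul_zero]

end ListProd

/-! ### Divisibility in `k`-graphs -/

section Graph

variable {k : ℕ} {Λ : Type u} (G : KGraph k Λ)

lemma kgraph_exists_of_divides {f g : Λ} (h : G.Divides f g) :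
    ∃ e, G.D2 f e ∧ G.mul f e = g := by
  rcases h with rfl | h
  · exact ⟨G.src f, (G.comp_iff _ _).2 (G.rng_obj _ (G.obj_src f)).symm, G.mul_src f⟩
  · exact h

/-- By unique factorization, intersecting morphisms of comparable degree divide one another. -/
lemma kgraph_divides {f h : Λ} (hd : G.d h ≤ G.d f) (hi : G.Intersects f h) :
    ∃ e, G.D2 h e ∧ G.mul h e = f := by
  obtain ⟨m, hf, hh⟩ := hi
  obtain ⟨a, hfa, rfl⟩ := kgraph_exists_of_divides G hf
  obtain ⟨b, hhb, hb⟩ := kgraph_exists_of_divides G hh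
  obtain ⟨⟨f₁, f₂⟩, ⟨h1, h2, h3, h4⟩, -⟩ :=
    G.factor f (G.d h) (G.d f - G.d h) (add_tsub_cancel_of_le hd).symm
  dsimp only at h1 h2 h3 h4
  have hfa' := hfa
  rw [← h4] at hfa'
  obtain ⟨k1, k2, k3⟩ := G.assoc₂ _ _ _ h1 hfa'
  rw [h4] at k3
  have hdm := G.d_mul _ _ hhb
  have hdm' := G.d_mul _ _ k2
  rw [← k3, ← hb, hdm, h2] at hdm'
  have := (G.factor (G.mul f a) (G.d h) (G.d b) (by rw [← hb, hdm])).unique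
    (y₁ := (h, b)) (y₂ := (f₁, G.mul f₂ a)) ⟨hhb, rfl, rfl, hb⟩
    ⟨k2, h2, (add_left_cancel hdm').symm, k3.symm⟩
  have hh1 : h = f₁ := congrArg Prod.fst this
  exact ⟨f₂, hh1 ▸ h1, hh1 ▸ h4⟩

end Graph

/-! ### Kumjian–Pask families: elementary relations -/

section Family

variable {k : ℕ} {Λ : Type u} {H : Type*} [NormedAddCommGroup H]
    [InnerProductSpace ℂ H] [CompleteSpace H]
    {G : KGraph k Λ} {S : Λ → H →L[ℂ] H}

lemma kp_rng_mul (hS : IsKPFamily G S) (f : Λ) : S (G.rng f) * S f = S f := by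
  rw [← hS.kp2 _ _ ((G.comp_iff _ _).2 (G.src_obj _ (G.obj_rng f))), G.rng_mul']

lemma kp_mul_src (hS : IsKPFamily G S) (f : Λ) : S f * S (G.src f) = S f := by
  rw [← hS.kp3, ← mul_assoc, hS.partialIsometry]

lemma kp_ncomp (hS : IsKPFamily G S) (f g : Λ) (h : ¬ G.D2 f g) : S f * S g = 0 := by
  rw [← kp_mul_src hS f, ← kp_rng_mul hS g, mul_assoc, ← mul_assoc (S (G.src f)),
    hS.kp1_orth _ _ (G.obj_src f) (G.obj_rng g) (fun e => h ((G.comp_iff _ _).2 e))]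
  simp

lemma star_PP (f : Λ) : star (PP S f) = PP S f := by simp [PP]

lemma PP_idem (hS : IsKPFamily G S) (f : Λ) : PP S f * PP S f = PP S f := by
  rw [PP, ← mul_assoc, hS.partialIsometry]

lemma obj_mul_PP (hS : IsKPFamily G S) (f : Λ) : S (G.rng f) * PP S f = PP S f := by
  rw [PP, ← mul_assoc, kp_rng_mul hS]

lemma obj_mul_PP_ne (hS : IsKPFamily G S) {v : Λ} (hv : G.IsObj v) (f : Λ) (h : v ≠ G.rng f) :
    S v * PP S f = 0 := by
  rw [← obj_mul_PP hS f, ← mul_assoc, hS.kp1_orth _ _ hv (G.obj_rng f) h, zero_mul]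

lemma commute_of_mul {a b : H →L[ℂ] H} (ha : star a = a) (hb : star b = b)
    (h : star (a * b) = a * b) : Commute a b := by
  rw [star_mul, ha, hb] at h
  exact h.symm

lemma commute_obj_PP (hS : IsKPFamily G S) {v : Λ} (hv : G.IsObj v) (f : Λ) :
    Commute (S v) (PP S f) := by
  refine commute_of_mul (hS.kp1_proj v hv).1 (star_PP f) ?_
  by_cases h : v = G.rng f
  · rw [h, obj_mul_PP hS, star_PP]
  · rw [obj_mul_PP_ne hS hv f h, star_zero]

lemma commute_obj_obj (hS : IsKPFamily G S) {u v : Λ} (hu : G.IsObj u) (hv : G.IsObj v) :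
    Commute (S u) (S v) := by
  by_cases h : u = v
  · rw [h]
  · rw [Commute, SemiconjBy, hS.kp1_orth u v hu hv h, hS.kp1_orth v u hv hu (Ne.symm h)]

/-! ### Range projections -/

/-- Distinct morphisms of equal degree have orthogonal range projections. -/
lemma kp_orth (hrf : G.RowFiniteNoSources) (hS : IsKPFamily G S) {f g : Λ}
    (hd : G.d f = G.d g) (hne : f ≠ g) : PP S f * PP S g = 0 := by
  classical
  by_cases hr : G.rng f = G.rng g
  · have hfin := (hrf (G.rng g) (G.obj_rng g) (G.d g)).1
    have hsum : S (G.rng g) = ∑ m ∈ hfin.toFinset, PP S m :=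
      hS.kp4 _ (G.obj_rng g) _ hfin
    have hg : g ∈ hfin.toFinset := by simp [KGraph.lamN]
    have hf : f ∈ hfin.toFinset.erase g := by simp [KGraph.lamN, hr, hd, hne]
    -- Sandwiching `S_v = ∑ P_m` between two copies of `P_g` leaves `∑_{m ≠ g} P_g P_m P_g = 0`.
    have h1 : PP S g = ∑ m ∈ hfin.toFinset, PP S g * PP S m * PP S g := by
      rw [← Finset.sum_mul, ← Finset.mul_sum, ← hsum, mul_assoc, obj_mul_PP hS, PP_idem hS]
    rw [← Finset.add_sum_erase _ _ hg, PP_idem hS, PP_idem hS, left_eq_add] at h1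
    have hpos : ∀ m, PP S g * PP S m * PP S g = star (PP S m * PP S g) * (PP S m * PP S g) := by
      intro m
      rw [star_mul, star_PP, star_PP, mul_assoc, mul_assoc, ← mul_assoc (PP S m), PP_idem hS]
    simp only [hpos] at h1
    rw [Finset.sum_eq_zero_iff_of_nonneg (fun _ _ => star_mul_self_nonneg _)] at h1
    exact (CStarRing.star_mul_self_eq_zero_iff _).1 (h1 f hf)
  · rw [← obj_mul_PP hS f, (commute_obj_PP hS (G.obj_rng f) f).eq, mul_assoc,
      obj_mul_PP_ne hS (G.obj_rng f) g hr, mul_zero]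

lemma PP_mul (hS : IsKPFamily G S) {f e : Λ} (h : G.D2 f e) :
    PP S (G.mul f e) = S f * PP S e * star (S f) := by
  simp only [PP, hS.kp2 _ _ h, star_mul, mul_assoc]

lemma kp_expand (hS : IsKPFamily G S) (f : Λ) (n : Fin k → ℕ)
    (hfin : (G.lamN (G.src f) n).Finite) :
    PP S f = ∑ e ∈ hfin.toFinset, PP S (G.mul f e) := by
  have h : ∀ e ∈ hfin.toFinset, PP S (G.mul f e) = S f * PP S e * star (S f) := by
    intro e he
    have he' : G.rng e = G.src f := ((Set.Finite.mem_toFinset hfin).1 he).1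
    exact PP_mul hS ((G.comp_iff _ _).2 he'.symm)
  rw [Finset.sum_congr rfl h, ← Finset.sum_mul, ← Finset.mul_sum]
  have hsum : S (G.src f) = ∑ m ∈ hfin.toFinset, PP S m := hS.kp4 _ (G.obj_src f) _ hfin
  rw [← hsum, kp_mul_src hS, PP]

/-- Any two range projections are sums of range projections of multiples of one fixed degree. -/
lemma kp_expand_pair (hrf : G.RowFiniteNoSources) (hS : IsKPFamily G S) (f g : Λ) :
    ∃ (n : Fin k → ℕ) (A B : Finset Λ),
      (PP S f = ∑ e ∈ A, PP S (G.mul f e)) ∧ (PP S g = ∑ e ∈ B, PP S (G.mul g e)) ∧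
      (∀ e ∈ A, G.D2 f e ∧ G.d (G.mul f e) = n) ∧ (∀ e ∈ B, G.D2 g e ∧ G.d (G.mul g e) = n) := by
  have key : ∀ (f : Λ) (n : Fin k → ℕ), G.d f ≤ n → ∃ A : Finset Λ,
      (PP S f = ∑ e ∈ A, PP S (G.mul f e)) ∧ ∀ e ∈ A, G.D2 f e ∧ G.d (G.mul f e) = n := by
    intro f n hn
    have hfin := (hrf (G.src f) (G.obj_src f) (n - G.d f)).1
    refine ⟨hfin.toFinset, kp_expand hS f _ hfin, fun e he => ?_⟩
    obtain ⟨h1, h2⟩ := (Set.Finite.mem_toFinset hfin).1 he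
    have hc : G.D2 f e := (G.comp_iff _ _).2 h1.symm
    exact ⟨hc, by rw [G.d_mul _ _ hc, h2, add_tsub_cancel_of_le hn]⟩
  obtain ⟨A, hA, hA'⟩ := key f (G.d f ⊔ G.d g) le_sup_left
  obtain ⟨B, hB, hB'⟩ := key g (G.d f ⊔ G.d g) le_sup_right
  exact ⟨_, A, B, hA, hB, hA', hB'⟩

lemma kp_commPP (hrf : G.RowFiniteNoSources) (hS : IsKPFamily G S) (f g : Λ) :
    Commute (PP S f) (PP S g) := by
  obtain ⟨n, A, B, hA, hB, hA', hB'⟩ := kp_expand_pair hrf hS f g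
  rw [hA, hB]
  refine Commute.sum_left _ _ _ fun e he => Commute.sum_right _ _ _ fun e' he' => ?_
  have hd : G.d (G.mul f e) = G.d (G.mul g e') := by rw [(hA' e he).2, (hB' e' he').2]
  by_cases h : G.mul f e = G.mul g e'
  · rw [h]
    exact Commute.refl _
  · rw [Commute, SemiconjBy, kp_orth hrf hS hd h, kp_orth hrf hS hd.symm (Ne.symm h)]

lemma kp_orthPP (hrf : G.RowFiniteNoSources) (hS : IsKPFamily G S) (f g : Λ)
    (hfg : G.Disjnt f g) : PP S f * PP S g = 0 := by
  obtain ⟨n, A, B, hA, hB, hA', hB'⟩ := kp_expand_pair hrf hS f g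
  rw [hA, hB, Finset.sum_mul]
  refine Finset.sum_eq_zero fun e he => ?_
  rw [Finset.mul_sum]
  refine Finset.sum_eq_zero fun e' he' => ?_
  refine kp_orth hrf hS (by rw [(hA' e he).2, (hB' e' he').2]) fun h => ?_
  exact hfg ⟨_, Or.inr ⟨e, (hA' e he).1, rfl⟩, Or.inr ⟨e', (hB' e' he').1, h.symm⟩⟩

lemma kp_isRepn_s19 (hrf : G.RowFiniteNoSources) (hS : IsKPFamily G S) :
    IsRepn G.toSemigroupoid S where
  partialIsometry := hS.partialIsometry
  map_comp f g h := (hS.kp2 f g h).symm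
  map_ncomp := kp_ncomp hS
  commQQ f g := by
    rw [QQ, QQ, hS.kp3, hS.kp3]
    exact commute_obj_obj hS (G.obj_src f) (G.obj_src g)
  commQP f g := by
    rw [QQ, hS.kp3]
    exact commute_obj_PP hS (G.obj_src f) g
  commPP := kp_commPP hrf hS
  orthPP := kp_orthPP hrf hS
  QdomP f g h := by
    rw [QQ, hS.kp3, (G.comp_iff _ _).1 h, obj_mul_PP hS]

/-! ### Nondegeneracy and tightness -/

/-- By nondegeneracy, an operator that annihilates every vertex projection vanishes. -/
lemma kp_eq_zero (hS : IsKPFamily G S) (hnd : Nondegen S) (A : H →L[ℂ] H)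
    (hA : ∀ v, G.IsObj v → A * S v = 0) : A = 0 := by
  -- The star closure is carried along, since `{a | A * a = 0}` is only a right ideal.
  have h1 : ∀ a ∈ NonUnitalStarAlgebra.adjoin ℂ (Set.range S), A * a = 0 ∧ A * star a = 0 := by
    intro a ha
    induction ha using NonUnitalStarAlgebra.adjoin_induction with
    | mem x hx =>
      obtain ⟨f, rfl⟩ := hx
      constructor
      · rw [← kp_rng_mul hS, ← mul_assoc, hA _ (G.obj_rng f), zero_mul]
      · rw [← kp_mul_src hS, star_mul, (hS.kp1_proj _ (G.obj_src f)).1, ← mul_assoc,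
          hA _ (G.obj_src f), zero_mul]
    | add x y _ _ hx hy => simp [mul_add, hx, hy]
    | zero => simp
    | mul x y _ _ hx hy =>
      rw [star_mul, ← mul_assoc, ← mul_assoc, hx.1, hy.2, zero_mul, zero_mul]
      exact ⟨rfl, rfl⟩
    | smul r x _ hx => simp [hx]
    | star x _ hx => simpa using hx.symm
  have h2 : ∀ a ∈ (NonUnitalStarAlgebra.adjoin ℂ (Set.range S)).topologicalClosure, A * a = 0 := by
    intro a ha
    have hcl : IsClosed {a : H →L[ℂ] H | A * a = 0} :=
      isClosed_eq (continuous_const.mul continuous_id) continuous_const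
    exact closure_minimal (fun a ha => (h1 a ha).1) hcl ha
  have h3 : (⊤ : Submodule ℂ H) ≤ A.ker := by
    rw [← hnd]
    refine Submodule.topologicalClosure_minimal _ (Submodule.span_le.2 ?_) A.isClosed_ker
    rintro y ⟨a, ha, x, rfl⟩
    have := congrArg (fun T : H →L[ℂ] H => T x) (h2 a ha)
    simpa using this
  ext x
  simpa using h3 (Submodule.mem_top (x := x))

lemma kp_ext (hS : IsKPFamily G S) (hnd : Nondegen S) {A B : H →L[ℂ] H}
    (h : ∀ v, G.IsObj v → A * S v = B * S v) : A = B := by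
  refine sub_eq_zero.1 (kp_eq_zero hS hnd _ fun v hv => ?_)
  rw [sub_mul, h v hv, sub_self]

/-- If `K` covers `X` and `X` contains all morphisms with range `v`, then `∏_{h ∈ K} (1 - P_h)`
annihilates `S_v`. -/
lemma kp_cover (hrf : G.RowFiniteNoSources) (hS : IsKPFamily G S) {X : Set Λ} {K : Finset Λ}
    (hK : G.IsCovering ↑K X) {v : Λ} (hv : G.IsObj v) (hX : ∀ f, G.rng f = v → f ∈ X) :
    fprod K (fun h => 1 - PP S h) * S v = 0 := by
  have hfin := (hrf v hv (K.sup G.d)).1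
  have hsum : S v = ∑ m ∈ hfin.toFinset, PP S m := hS.kp4 _ hv _ hfin
  rw [hsum, Finset.mul_sum]
  refine Finset.sum_eq_zero fun f hf => ?_
  obtain ⟨hf1, hf2⟩ := (Set.Finite.mem_toFinset hfin).1 hf
  obtain ⟨h, hh, hi⟩ := hK.2 f (hX f hf1)
  have hh' : h ∈ K := hh
  obtain ⟨e, he, rfl⟩ := kgraph_divides G (hf2 ▸ Finset.le_sup (f := G.d) hh') hi
  refine list_prod_mul_eq_zero _ _ _
    (fun x _ => (Commute.one_left _).sub_left (kp_commPP hrf hS x _))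
    ⟨h, Finset.mem_toList.2 hh', ?_⟩
  rw [PP_mul hS he, sub_mul, one_mul, sub_eq_zero]
  simp only [PP, ← mul_assoc, hS.partialIsometry]

lemma kp_isTight (hrf : G.RowFiniteNoSources) (hS : IsKPFamily G S) (hnd : Nondegen S) :
    IsTight G.toSemigroupoid S := by
  intro F G' K hK
  refine kp_ext hS hnd fun v hv => ?_
  have hQ : ∀ f, QQ S f = S (G.src f) := hS.kp3
  have hD : ∀ f, G.D2 f v ↔ G.src f = v := fun f => by rw [G.comp_iff, G.rng_obj v hv]
  have hQ1 : ∀ f, G.D2 f v → QQ S f * S v = S v := fun f hf => by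
    rw [hQ, (hD f).1 hf, (hS.kp1_proj v hv).2]
  have hQ0 : ∀ f, ¬ G.D2 f v → QQ S f * S v = 0 := fun f hf => by
    rw [hQ, hS.kp1_orth _ _ (G.obj_src f) hv (fun e => hf ((hD f).2 e))]
  have hQc : ∀ f, Commute (QQ S f) (S v) := fun f => by
    rw [hQ]; exact commute_obj_obj hS (G.obj_src f) hv
  have hQc' : ∀ f, Commute (1 - QQ S f) (S v) := fun f => (Commute.one_left _).sub_left (hQc f)
  by_cases hvX : v ∈ G.lamFG F G'
  · have hX : ∀ f, G.rng f = v → f ∈ G.lamFG F G' := by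
      intro f hf
      have hDf : ∀ g, G.D2 g f ↔ G.D2 g v := fun g => by rw [hD, G.comp_iff, hf]
      simpa only [Semigroupoid.lamFG, Set.mem_ofPred_eq, hDf] using hvX
    rw [joinP, sub_mul, one_mul, kp_cover hrf hS hK hv hX, sub_zero, mul_assoc]
    rw [fprod, fprod, list_prod_mul_eq_self (fun g => 1 - QQ S g), list_prod_mul_eq_self]
    · exact fun f hf => hQ1 f (hvX.1 f (Finset.mem_toList.1 hf))
    · intro g hg
      rw [sub_mul, one_mul, hQ0 g (hvX.2 g (Finset.mem_toList.1 hg)), sub_zero]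
  · have hl : joinP K S * S v = 0 := by
      rw [joinP, sub_mul, one_mul, fprod, list_prod_mul_eq_self, sub_self]
      intro h hh
      have hhX : h ∈ G.lamFG F G' := hK.1 (Finset.mem_toList.1 hh)
      have hne : v ≠ G.rng h := by
        intro hvh
        have hDh : ∀ g, G.D2 g h ↔ G.D2 g v := fun g => by rw [hD, G.comp_iff, hvh]
        exact hvX (by simpa only [Semigroupoid.lamFG, Set.mem_ofPred_eq, hDh] using hhX)
      rw [sub_mul, one_mul, ← (commute_obj_PP hS hv h).eq, obj_mul_PP_ne hS hv h hne, sub_zero]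
    rw [hl, mul_assoc]
    by_cases hF : ∀ f ∈ F, G.D2 f v
    · have hG : ∃ g ∈ G', G.D2 g v := by
        by_contra hcon
        push Not at hcon
        exact hvX ⟨hF, hcon⟩
      obtain ⟨g, hg, hgv⟩ := hG
      rw [fprod, fprod, list_prod_mul_eq_zero (fun g => 1 - QQ S g) _ _ (fun x _ => hQc' x)
        ⟨g, Finset.mem_toList.2 hg, by rw [sub_mul, one_mul, hQ1 g hgv, sub_self]⟩, mul_zero]
    · push Not at hF
      obtain ⟨f, hf, hfv⟩ := hF
      rw [fprod, fprod, (list_prod_commute (fun g => 1 - QQ S g) _ _ (fun x _ => hQc' x)).eq,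
        ← mul_assoc, list_prod_mul_eq_zero _ _ _ (fun x _ => hQc x)
          ⟨f, Finset.mem_toList.2 hf, hQ0 f hfv⟩, zero_mul]

end Family

/-- A nondegenerate Kumjian–Pask family on a Hilbert space is a tight representation of
the underlying semigroupoid. -/
theorem kp_tight_repn {k : ℕ} {Λ : Type u} {H : Type*} [NormedAddCommGroup H]
    [InnerProductSpace ℂ H] [CompleteSpace H]
    (G : KGraph k Λ) (hrf : G.RowFiniteNoSources)
    {S : Λ → H →L[ℂ] H} (hS : IsKPFamily G S) (hnd : Nondegen S) :
    IsRepn G.toSemigroupoid S ∧ IsTight G.toSemigroupoid S :=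
  ⟨kp_isRepn_s19 hrf hS, kp_isTight hrf hS hnd⟩
end
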